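/- arXiv:1505.06710 — 3 statements merged into one kernel-verified Lean document; each statement's English description precedes it below -/
import Mathlib

section
/- Poincaré inequality for the Dyck random transposition chain (spectral gap at least 1/n², giving O(n² log n) mixing): for every n ≥ 1 and every function f : 𝓓(n) → ℝ, 𝓔(f,f) ≥ (1/n²) · Var_π(f). -/
open scoped Classical

/-- The set of Dyck paths of length `2n`, identified with their up-step sets:
`n`-element subsets `S` of `{1,…,2n}` with `2·|S ∩ {1,…,k}| ≥ k` for all `k`. -/
noncomputable def dyck (n : ℕ) : Finset (Finset ℕ) :=
  (Finset.Icc 1 (2 * n)).powerset.filter fun S =>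
    S.card = n ∧ ∀ k ∈ Finset.Icc 1 (2 * n), k ≤ 2 * (S ∩ Finset.Icc 1 k).card

/-- Off-diagonal transition probability of the Dyck random transposition chain:
`1/(2n²)` if `y` is obtained from `x` by exchanging one up-step with one
down-step, and `0` otherwise. -/
noncomputable def dyckStep (n : ℕ) (x y : Finset ℕ) : ℝ :=
  if (x \ y).card = 1 ∧ (y \ x).card = 1 then 1 / (2 * (n : ℝ) ^ 2) else 0

/-- Transition matrix of the Dyck random transposition chain. -/
noncomputable def dyckP (n : ℕ) (x y : Finset ℕ) : ℝ :=
  if x = y then 1 - ∑ z ∈ dyck n, dyckStep n x z else dyckStep n x y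

/-- The uniform stationary distribution `π(x) = 1/C_n` on `𝓓(n)`. -/
noncomputable def dyckPi (n : ℕ) : ℝ := ((dyck n).card : ℝ)⁻¹

/-- The Dirichlet form `𝓔(f,f)` of the Dyck random transposition chain. -/
noncomputable def dyckDirichlet (n : ℕ) (f : Finset ℕ → ℝ) : ℝ :=
  (1 / 2) * ∑ x ∈ dyck n, ∑ y ∈ dyck n, (f x - f y) ^ 2 * dyckP n x y * dyckPi n

/-- The variance `Var_π(f)` with respect to the uniform distribution on `𝓓(n)`. -/
noncomputable def dyckVar (n : ℕ) (f : Finset ℕ → ℝ) : ℝ :=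
  (∑ x ∈ dyck n, f x ^ 2 * dyckPi n) - (∑ x ∈ dyck n, f x * dyckPi n) ^ 2


/-- Generalized eigenvector criterion for positive semidefiniteness (index type version). -/
lemma eig_fintype {ι : Type*} [Fintype ι] [DecidableEq ι] (Q : ι → ι → ℝ) (w : ι → ℝ)
    (hQ : ∀ e a, Q e a = Q a e) (hw : ∀ e, 0 < w e)
    (H : ∀ l : ℝ, l < 0 → ∀ h : ι → ℝ, (∀ e, ∑ a, Q e a * h a = l * w e * h e) → ∀ e, h e = 0)
    (g : ι → ℝ) : 0 ≤ ∑ e, ∑ a, Q e a * g e * g a := by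
  set s : ι → ℝ := fun e => Real.sqrt (w e) with hs
  have hspos : ∀ e, 0 < s e := fun e => Real.sqrt_pos.mpr (hw e)
  have hss : ∀ e, s e * s e = w e := fun e => Real.mul_self_sqrt (hw e).le
  let K : Matrix ι ι ℝ := Matrix.of fun e a => Q e a / (s e * s a)
  have hK : K.IsHermitian := by
    ext e a
    simp only [K, Matrix.conjTranspose_apply, Matrix.of_apply, star_trivial]
    rw [hQ a e, mul_comm]
  have hpsd : K.PosSemidef := by
    rw [hK.posSemidef_iff_eigenvalues_nonneg]
    intro i
    by_contra hneg
    have hneg : hK.eigenvalues i < 0 := not_le.mp hneg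
    have hev := hK.mulVec_eigenvectorBasis i
    set x : ι → ℝ := (hK.eigenvectorBasis i).ofLp with hx
    have h0 := H _ hneg (fun e => x e / s e) (by
      intro e
      have := congrFun hev e
      simp only [Matrix.mulVec, dotProduct, K, Matrix.of_apply, Pi.smul_apply, smul_eq_mul] at this
      have h2 : ∑ a, Q e a * (x a / s a) = s e * ∑ a, Q e a / (s e * s a) * x a := by
        rw [Finset.mul_sum]
        refine Finset.sum_congr rfl fun a _ => ?_
        have := (hspos e).ne'
        have := (hspos a).ne'
        field_simp
      rw [h2, this, ← hss e]
      have := (hspos e).ne'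
      field_simp)
    have hx0 : hK.eigenvectorBasis i = 0 := by
      ext e
      have := h0 e
      have h3 := (hspos e).ne'
      have : x e = 0 := by
        rcases div_eq_zero_iff.mp this with h | h
        · exact h
        · exact absurd h h3
      simpa [hx] using this
    have := hK.eigenvectorBasis.orthonormal.1 i
    rw [hx0] at this
    simp at this
  have := hpsd.dotProduct_mulVec_nonneg (fun e => s e * g e)
  simp only [Matrix.mulVec, dotProduct, K, Matrix.of_apply, Pi.star_apply, star_trivial] at this
  refine this.trans_eq (Finset.sum_congr rfl fun e _ => ?_)
  rw [Finset.mul_sum]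
  refine Finset.sum_congr rfl fun a _ => ?_
  have := (hspos e).ne'
  have := (hspos a).ne'
  field_simp

lemma eig_finset {α : Type*} (T : Finset α) (Q : α → α → ℝ) (w : α → ℝ)
    (hQ : ∀ e a, Q e a = Q a e) (hw : ∀ e, 0 < w e)
    (H : ∀ l : ℝ, l < 0 → ∀ h : α → ℝ,
      (∀ e ∈ T, ∑ a ∈ T, Q e a * h a = l * w e * h e) → ∀ e ∈ T, h e = 0)
    (g : α → ℝ) : 0 ≤ ∑ e ∈ T, ∑ a ∈ T, Q e a * g e * g a := by
  have := eig_fintype (ι := T) (fun e a => Q e a) (fun e => w e) (fun e a => hQ e a)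
    (fun e => hw e) (by
      intro l hl h hh e
      have := H l hl (fun a => if ha : a ∈ T then h ⟨a, ha⟩ else 0) (by
        intro e he
        have := hh ⟨e, he⟩
        simp only [he, dif_pos]
        rw [← this, ← Finset.sum_coe_sort]
        refine Finset.sum_congr rfl fun a _ => ?_
        simp) e e.2
      simpa using this) (fun e => g e)
  rw [← Finset.sum_coe_sort]
  refine this.trans_eq (Finset.sum_congr rfl fun e _ => ?_)
  rw [← Finset.sum_coe_sort T]

/-- Oppenheim's trickle-down, in the form used for matroids. -/
lemma trickle {α : Type*} (T : Finset α) (W : α → α → ℝ) (w : α → ℝ)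
    (hW : ∀ e a, W e a = W a e) (hW0 : ∀ e a, 0 ≤ W e a)
    (hw : ∀ e ∈ T, ∑ a ∈ T, W e a = w e)
    (hconn : ∀ h : α → ℝ, (∀ e ∈ T, ∀ a ∈ T, W e a ≠ 0 → h e = h a) →
      ∀ e ∈ T, ∀ a ∈ T, w e ≠ 0 → w a ≠ 0 → h e = h a)
    (hloc : ∀ h : α → ℝ, ∑ e ∈ T, ∑ a ∈ T, W e a * h e * h a ≤
      ∑ e ∈ T, (∑ a ∈ T, W e a * h a) ^ 2 / w e)
    (g : α → ℝ) :
    (∑ e ∈ T, w e) * (∑ e ∈ T, ∑ a ∈ T, W e a * g e * g a) ≤ (∑ e ∈ T, w e * g e) ^ 2 := by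
  set Wt := ∑ e ∈ T, w e with hWt
  have hwn : ∀ e ∈ T, 0 ≤ w e := fun e he => by
    rw [← hw e he]; exact Finset.sum_nonneg fun a _ => hW0 e a
  have hWtn : 0 ≤ Wt := Finset.sum_nonneg hwn
  have key := eig_finset T (fun e a => w e * w a - Wt * W e a)
    (fun e => if 0 < w e then w e else 1) (fun e a => by simp only [hW e a]; ring)
    (fun e => by split_ifs <;> linarith) (by
      intro l hl h hh
      set m := ∑ a ∈ T, w a * h a with hm
      have h1 : ∀ e ∈ T, w e * m - Wt * ∑ a ∈ T, W e a * h a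
          = l * (if 0 < w e then w e else 1) * h e := by
        intro e he
        rw [← hh e he, hm, Finset.mul_sum, Finset.mul_sum, ← Finset.sum_sub_distrib]
        refine Finset.sum_congr rfl fun a _ => ?_
        ring
      have hz : ∀ e ∈ T, w e = 0 → ∀ a ∈ T, W e a = 0 := by
        intro e he h0
        have := hw e he
        rw [h0] at this
        exact (Finset.sum_eq_zero_iff_of_nonneg (fun a _ => hW0 e a)).mp this
      have hloop : ∀ e ∈ T, w e = 0 → h e = 0 := by
        intro e he h0
        have := h1 e he
        rw [Finset.sum_eq_zero (fun a ha => by rw [hz e he h0 a ha, zero_mul]), h0] at this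
        simp at this
        rcases this with h | h
        · exact absurd h hl.ne
        · exact h
      have h2 : ∀ e ∈ T, w e * m - Wt * ∑ a ∈ T, W e a * h a = l * (w e * h e) := by
        intro e he
        rw [h1 e he]
        by_cases h0 : 0 < w e
        · simp [h0]; ring
        · rw [hloop e he (le_antisymm (not_lt.mp h0) (hwn e he))]; simp
      have hsum : ∑ e ∈ T, ∑ a ∈ T, W e a * h a = m := by
        rw [Finset.sum_comm, hm]
        refine Finset.sum_congr rfl fun a ha => ?_
        rw [← hw a ha, Finset.sum_mul]
        exact Finset.sum_congr rfl fun e _ => by rw [hW]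
      have hm0 : m = 0 := by
        have h3 := Finset.sum_congr rfl h2
        rw [Finset.sum_sub_distrib, ← Finset.sum_mul, ← Finset.mul_sum, hsum, ← Finset.mul_sum,
          ← hm, ← hWt, sub_self] at h3
        rcases mul_eq_zero.mp h3.symm with h | h
        · exact absurd h hl.ne
        · exact h
      rcases hWtn.eq_or_lt with hW00 | hWpos
      · intro e he
        exact hloop e he ((Finset.sum_eq_zero_iff_of_nonneg hwn).mp hW00.symm e he)
      set μ := -l / Wt with hμ
      have hμpos : 0 < μ := div_pos (by linarith) hWpos
      have h4 : ∀ e ∈ T, ∑ a ∈ T, W e a * h a = μ * (w e * h e) := by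
        intro e he
        have := h2 e he
        rw [hm0] at this
        rw [hμ, div_mul_eq_mul_div, eq_div_iff hWpos.ne']
        linarith
      set Z := ∑ e ∈ T, w e * h e ^ 2 with hZ
      have hq : ∑ e ∈ T, ∑ a ∈ T, W e a * h e * h a = μ * Z := by
        rw [hZ, Finset.mul_sum]
        refine Finset.sum_congr rfl fun e he => ?_
        have : ∑ a ∈ T, W e a * h e * h a = h e * ∑ a ∈ T, W e a * h a := by
          rw [Finset.mul_sum]; exact Finset.sum_congr rfl fun a _ => by ring
        rw [this, h4 e he]; ring
      have hl1 := hloc h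
      have hq2 : ∑ e ∈ T, (∑ a ∈ T, W e a * h a) ^ 2 / w e = μ ^ 2 * Z := by
        rw [hZ, Finset.mul_sum]
        refine Finset.sum_congr rfl fun e he => ?_
        rw [h4 e he]
        by_cases h0 : w e = 0
        · simp [h0]
        · field_simp
      rw [hq, hq2] at hl1
      have hr : ∑ e ∈ T, ∑ a ∈ T, W e a * h e ^ 2 = Z := by
        refine Finset.sum_congr rfl fun e he => ?_
        rw [← Finset.sum_mul, hw e he]
      have hr2 : ∑ e ∈ T, ∑ a ∈ T, W e a * h a ^ 2 = Z := by
        rw [← hr, Finset.sum_comm]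
        exact Finset.sum_congr rfl fun e _ => Finset.sum_congr rfl fun a _ => by rw [hW]
      have hD : ∑ e ∈ T, ∑ a ∈ T, W e a * (h e - h a) ^ 2 = 2 * Z - 2 * (μ * Z) := by
        have : ∀ e ∈ T, ∀ a ∈ T, W e a * (h e - h a) ^ 2
            = W e a * h e ^ 2 + W e a * h a ^ 2 - 2 * (W e a * h e * h a) := by
          intros; ring
        rw [Finset.sum_congr rfl fun e he => Finset.sum_congr rfl (this e he)]
        simp only [Finset.sum_sub_distrib, Finset.sum_add_distrib, ← Finset.mul_sum]
        rw [hr, hr2, hq]; ring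
      have hDn : ∀ e ∈ T, 0 ≤ ∑ a ∈ T, W e a * (h e - h a) ^ 2 := fun e _ =>
        Finset.sum_nonneg fun a _ => mul_nonneg (hW0 e a) (sq_nonneg _)
      have hDnn := Finset.sum_nonneg hDn
      have hZterm : ∀ e ∈ T, 0 ≤ w e * h e ^ 2 := fun e he => mul_nonneg (hwn e he) (sq_nonneg _)
      have hZn : 0 ≤ Z := Finset.sum_nonneg hZterm
      rcases hZn.eq_or_lt with hZ0 | hZpos
      · intro e he
        have := (Finset.sum_eq_zero_iff_of_nonneg hZterm).mp hZ0.symm e he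
        rcases mul_eq_zero.mp this with h | h
        · exact hloop e he h
        · exact pow_eq_zero_iff (two_ne_zero) |>.mp h
      have hμ1 : μ = 1 := by
        apply le_antisymm
        · rw [hD] at hDnn
          by_contra hc
          nlinarith
        · by_contra hc
          have : μ * (1 - μ) * Z ≤ 0 := by nlinarith
          have : 0 < μ * (1 - μ) * Z := by
            have : 0 < 1 - μ := by linarith
            positivity
          linarith
      have hD0 : ∑ e ∈ T, ∑ a ∈ T, W e a * (h e - h a) ^ 2 = 0 := by rw [hD, hμ1]; ring
      have hc := hconn h (by
        intro e he a ha hne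
        have h5 := (Finset.sum_eq_zero_iff_of_nonneg hDn).mp hD0 e he
        have h6 := (Finset.sum_eq_zero_iff_of_nonneg
          (fun a _ => mul_nonneg (hW0 e a) (sq_nonneg _))).mp h5 a ha
        rcases mul_eq_zero.mp h6 with h | h
        · exact absurd h hne
        · have := pow_eq_zero_iff (two_ne_zero) |>.mp h
          linarith)
      intro e he
      by_cases h0 : w e = 0
      · exact hloop e he h0
      have : m = h e * Wt := by
        rw [hm, hWt, Finset.mul_sum]
        refine Finset.sum_congr rfl fun a ha => ?_
        by_cases h1 : w a = 0
        · simp [h1]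
        · rw [hc e he a ha h0 h1]; ring
      rw [hm0] at this
      rcases mul_eq_zero.mp this.symm with h | h
      · exact h
      · exact absurd h hWpos.ne') g
  have e1 : ∑ e ∈ T, ∑ a ∈ T, (w e * w a - Wt * W e a) * g e * g a
      = (∑ e ∈ T, w e * g e) ^ 2 - Wt * (∑ e ∈ T, ∑ a ∈ T, W e a * g e * g a) := by
    rw [sq, Finset.sum_mul_sum, Finset.mul_sum, ← Finset.sum_sub_distrib]
    refine Finset.sum_congr rfl fun e _ => ?_
    rw [Finset.mul_sum, ← Finset.sum_sub_distrib]
    exact Finset.sum_congr rfl fun a _ => by ring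
  rw [e1] at key
  linarith

/-- A family of sets containing `S`, contained in `U`, with `r` elements outside `S`, and
satisfying the (dual) basis exchange property. -/
structure Exch (B : Finset (Finset ℕ)) (S U : Finset ℕ) (r : ℕ) : Prop where
  sub : ∀ x ∈ B, S ⊆ x
  subU : ∀ x ∈ B, x ⊆ U
  card : ∀ x ∈ B, (x \ S).card = r
  ex : ∀ x ∈ B, ∀ y ∈ B, ∀ a ∈ y \ x, ∃ b ∈ x \ y, insert a (x.erase b) ∈ B

/-- The members of the family containing `e`. -/
noncomputable def lnk (B : Finset (Finset ℕ)) (e : ℕ) : Finset (Finset ℕ) :=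
  B.filter fun x => e ∈ x

lemma mem_lnk {B : Finset (Finset ℕ)} {e : ℕ} {x : Finset ℕ} : x ∈ lnk B e ↔ x ∈ B ∧ e ∈ x := by
  simp [lnk]

lemma Exch.link {B : Finset (Finset ℕ)} {S U : Finset ℕ} {r : ℕ} (h : Exch B S U (r + 1))
    {e : ℕ} (he : e ∉ S) : Exch (lnk B e) (insert e S) U r where
  sub x hx := by
    rw [mem_lnk] at hx
    exact Finset.insert_subset hx.2 (h.sub x hx.1)
  subU x hx := h.subU x (mem_lnk.mp hx).1
  card x hx := by
    rw [mem_lnk] at hx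
    have h1 : x \ insert e S = (x \ S).erase e := by
      ext a; simp; tauto
    rw [h1, Finset.card_erase_of_mem (by simp [hx.2, he]), h.card x hx.1]; rfl
  ex x hx y hy a ha := by
    rw [mem_lnk] at hx hy
    obtain ⟨b, hb, hB⟩ := h.ex x hx.1 y hy.1 a ha
    refine ⟨b, hb, mem_lnk.mpr ⟨hB, ?_⟩⟩
    have : e ≠ b := by
      rintro rfl
      exact (Finset.mem_sdiff.mp hb).2 hy.2
    simp [this, hx.2]

lemma Exch.swap {B : Finset (Finset ℕ)} {S U : Finset ℕ} {r : ℕ} (h : Exch B S U r)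
    (F : Finset ℕ → ℕ → ℝ) :
    ∑ x ∈ B, ∑ e ∈ x \ S, F x e = ∑ e ∈ U \ S, ∑ x ∈ lnk B e, F x e := by
  refine Finset.sum_comm' fun x e => ?_
  rw [mem_lnk, Finset.mem_sdiff, Finset.mem_sdiff]
  constructor
  · rintro ⟨hx, he, hS⟩
    exact ⟨⟨hx, he⟩, h.subU x hx he, hS⟩
  · rintro ⟨⟨hx, he⟩, _, hS⟩
    exact ⟨hx, he, hS⟩

/-- Off-diagonal part of the square of a linear statistic. -/
noncomputable def qf (S : Finset ℕ) (g : ℕ → ℝ) (x : Finset ℕ) : ℝ :=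
  (∑ a ∈ x \ S, g a) ^ 2 - ∑ a ∈ x \ S, g a ^ 2

/-- Number of bases containing two distinct elements. -/
noncomputable def wt (B : Finset (Finset ℕ)) (e a : ℕ) : ℝ :=
  if e = a then 0 else ((lnk (lnk B e) a).card : ℝ)

lemma wt_symm (B : Finset (Finset ℕ)) (e a : ℕ) : wt B e a = wt B a e := by
  have : lnk (lnk B e) a = lnk (lnk B a) e := by
    ext x; simp only [mem_lnk]; tauto
  unfold wt
  rw [this]
  by_cases h : e = a
  · simp [h]
  · simp [h, Ne.symm h]

lemma wt_nonneg (B : Finset (Finset ℕ)) (e a : ℕ) : 0 ≤ wt B e a := by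
  unfold wt; split_ifs <;> positivity

lemma sdiff_insert_erase (x S : Finset ℕ) (e : ℕ) : x \ insert e S = (x \ S).erase e := by
  ext a; simp; tauto

lemma sum_sdiff_insert {x S : Finset ℕ} {e : ℕ} (he : e ∈ x \ S) (g : ℕ → ℝ) :
    ∑ a ∈ x \ insert e S, g a = ∑ a ∈ x \ S, g a - g e := by
  rw [sdiff_insert_erase, ← Finset.add_sum_erase _ g he]; ring

lemma Exch.wrow {B : Finset (Finset ℕ)} {S U : Finset ℕ} {r : ℕ} (h : Exch B S U (r + 1))
    {e : ℕ} (he : e ∈ U \ S) (g : ℕ → ℝ) :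
    ∑ a ∈ U \ S, wt B e a * g a = ∑ x ∈ lnk B e, ∑ a ∈ x \ insert e S, g a := by
  rw [(h.link (Finset.mem_sdiff.mp he).2).swap (fun _ a => g a), sdiff_insert_erase,
    ← Finset.add_sum_erase _ _ he]
  simp only [wt, if_true, zero_mul, zero_add, Finset.sum_const, nsmul_eq_mul]
  refine Finset.sum_congr rfl fun a ha => ?_
  rw [if_neg (Finset.ne_of_mem_erase ha).symm]

lemma Exch.wquad {B : Finset (Finset ℕ)} {S U : Finset ℕ} {r : ℕ} (h : Exch B S U (r + 1))
    (g : ℕ → ℝ) :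
    ∑ e ∈ U \ S, ∑ a ∈ U \ S, wt B e a * g e * g a = ∑ x ∈ B, qf S g x := by
  have h1 : ∀ e ∈ U \ S, ∑ a ∈ U \ S, wt B e a * g e * g a
      = ∑ x ∈ lnk B e, g e * ∑ a ∈ x \ insert e S, g a := by
    intro e he
    rw [← Finset.mul_sum, ← h.wrow he, Finset.mul_sum]
    exact Finset.sum_congr rfl fun a _ => by ring
  rw [Finset.sum_congr rfl h1, ← h.swap (fun x e => g e * ∑ a ∈ x \ insert e S, g a)]
  refine Finset.sum_congr rfl fun x _ => ?_
  rw [Finset.sum_congr rfl fun e he => by rw [sum_sdiff_insert he]]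
  unfold qf
  rw [sq, Finset.sum_mul, ← Finset.sum_sub_distrib]
  exact Finset.sum_congr rfl fun e _ => by ring

lemma Exch.par {B : Finset (Finset ℕ)} {S U : Finset ℕ} {r : ℕ} (h : Exch B S U r)
    {e a k : ℕ} {x y : Finset ℕ} (hx : x ∈ B) (hy : y ∈ B) (hex : e ∈ x) (hkx : k ∈ x)
    (hek : e ≠ k) (hay : a ∈ y) (hn : ¬ ∃ z ∈ B, e ∈ z ∧ a ∈ z) : ∃ z ∈ B, a ∈ z ∧ k ∈ z := by
  have hax : a ∉ x := fun hax => hn ⟨x, hx, hex, hax⟩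
  obtain ⟨b, hb, hB⟩ := h.ex x hx y hy a (by simp [hay, hax])
  by_cases hbe : b = e
  · refine ⟨_, hB, by simp, ?_⟩
    subst hbe
    simp [hkx, hek.symm]
  · exact absurd ⟨_, hB, by simp [hex, Ne.symm hbe], by simp⟩ hn

lemma psd_classes (L : Finset ℕ) (c : ℕ → Finset ℕ) (h : ℕ → ℝ) :
    0 ≤ ∑ e ∈ L, ∑ a ∈ L, if c e = c a then h e * h a else 0 := by
  have h1 : ∀ e ∈ L, (∑ a ∈ L, if c e = c a then h e * h a else 0)
      = h e * ∑ a ∈ L with c a = c e, h a := by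
    intro e _
    rw [Finset.sum_filter, Finset.mul_sum]
    refine Finset.sum_congr rfl fun a _ => ?_
    by_cases hc : c e = c a
    · simp [hc]
    · simp [hc, Ne.symm hc]
  rw [Finset.sum_congr rfl h1,
    ← Finset.sum_fiberwise_of_maps_to (g := c) (t := L.image c)
      (fun e he => Finset.mem_image_of_mem c he)]
  refine Finset.sum_nonneg fun C _ => ?_
  have : ∑ e ∈ L with c e = C, h e * ∑ a ∈ L with c a = c e, h a
      = (∑ e ∈ L with c e = C, h e) * (∑ e ∈ L with c e = C, h e) := by
    rw [Finset.sum_mul]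
    refine Finset.sum_congr rfl fun e he => ?_
    rw [(Finset.mem_filter.mp he).2]
  rw [this]
  exact mul_self_nonneg _

lemma Exch.two {B : Finset (Finset ℕ)} {S U : Finset ℕ} (h : Exch B S U 2) (g : ℕ → ℝ) :
    2 * (B.card : ℝ) * ∑ x ∈ B, qf S g x ≤ (∑ x ∈ B, ∑ a ∈ x \ S, g a) ^ 2 := by
  set L := (U \ S).filter fun e => ∃ x ∈ B, e ∈ x with hL
  -- one-element characterization of weights
  have hwt : ∀ e ∈ L, ∀ a ∈ L, wt B e a
      = if e = a ∨ ¬ ∃ z ∈ B, e ∈ z ∧ a ∈ z then 0 else 1 := by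
    intro e he a ha
    unfold wt
    by_cases hea : e = a
    · simp [hea]
    by_cases hz : ∃ z ∈ B, e ∈ z ∧ a ∈ z
    · rw [if_neg hea, if_neg (not_or.mpr ⟨hea, not_not.mpr hz⟩)]
      obtain ⟨z, hz, hez, haz⟩ := hz
      have heS : e ∉ S := (Finset.mem_sdiff.mp (Finset.mem_filter.mp he).1).2
      have haS : a ∉ S := (Finset.mem_sdiff.mp (Finset.mem_filter.mp ha).1).2
      have huniq : ∀ y ∈ B, e ∈ y → a ∈ y → y = S ∪ {e, a} := by
        intro y hy hey hay
        have h2 : ({e, a} : Finset ℕ) = y \ S := by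
          apply Finset.eq_of_subset_of_card_le
          · intro b hb
            simp only [Finset.mem_insert, Finset.mem_singleton] at hb
            rcases hb with rfl | rfl <;> simp [*]
          · rw [h.card y hy, Finset.card_pair hea]
        rw [h2, Finset.union_sdiff_of_subset (h.sub y hy)]
      have : lnk (lnk B e) a = {z} := by
        ext y
        simp only [mem_lnk, Finset.mem_singleton]
        constructor
        · rintro ⟨⟨hy, hey⟩, hay⟩
          rw [huniq y hy hey hay, huniq z hz hez haz]
        · rintro rfl
          exact ⟨⟨hz, hez⟩, haz⟩
      simp [this]
    · rw [if_neg hea, if_pos (Or.inr hz)]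
      have : lnk (lnk B e) a = ∅ := by
        ext y
        simp only [mem_lnk, Finset.notMem_empty, iff_false]
        rintro ⟨⟨hy, hey⟩, hay⟩
        exact hz ⟨y, hy, hey, hay⟩
      simp [this]
  have hwt0 : ∀ e ∈ U \ S, ∀ a ∈ U \ S, ¬ (e ∈ L ∧ a ∈ L) → wt B e a = 0 := by
    intro e he a ha hn
    unfold wt
    split_ifs with hea
    · rfl
    · have : lnk (lnk B e) a = ∅ := by
        ext y
        simp only [mem_lnk, Finset.notMem_empty, iff_false]
        rintro ⟨⟨hy, hey⟩, hay⟩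
        exact hn ⟨Finset.mem_filter.mpr ⟨he, y, hy, hey⟩, Finset.mem_filter.mpr ⟨ha, y, hy, hay⟩⟩
      simp [this]
  let c : ℕ → Finset ℕ := fun e => L.filter fun a => e = a ∨ ¬ ∃ z ∈ B, e ∈ z ∧ a ∈ z
  have htrans : ∀ e ∈ L, ∀ b ∈ L, ∀ k ∈ L, (e = b ∨ ¬ ∃ z ∈ B, e ∈ z ∧ b ∈ z) →
      (b = k ∨ ¬ ∃ z ∈ B, b ∈ z ∧ k ∈ z) → (e = k ∨ ¬ ∃ z ∈ B, e ∈ z ∧ k ∈ z) := by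
    intro e he b hb k hk h1 h2
    by_cases heb : e = b
    · rw [heb]; exact h2
    by_cases hbk : b = k
    · rw [← hbk]; exact h1
    have h1 := h1.resolve_left heb
    have h2 := h2.resolve_left hbk
    by_contra hcon
    rw [not_or, not_not] at hcon
    obtain ⟨hek, x, hx, hex, hkx⟩ := hcon
    obtain ⟨y, hy, hby⟩ := (Finset.mem_filter.mp hb).2
    exact h2 (h.par hx hy hex hkx hek hby h1)
  have hsymm : ∀ e b : ℕ, (e = b ∨ ¬ ∃ z ∈ B, e ∈ z ∧ b ∈ z) →
      (b = e ∨ ¬ ∃ z ∈ B, b ∈ z ∧ e ∈ z) := by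
    rintro e b (h | h)
    · exact Or.inl h.symm
    · right
      rintro ⟨z, hz, h1, h2⟩
      exact h ⟨z, hz, h2, h1⟩
  have hc : ∀ e ∈ L, ∀ a ∈ L, (c e = c a ↔ (e = a ∨ ¬ ∃ z ∈ B, e ∈ z ∧ a ∈ z)) := by
    intro e he a ha
    constructor
    · intro hh
      have : a ∈ c a := Finset.mem_filter.mpr ⟨ha, Or.inl rfl⟩
      rw [← hh] at this
      exact (Finset.mem_filter.mp this).2
    · intro hh
      ext b
      simp only [c, Finset.mem_filter]
      constructor
      · rintro ⟨hb, h1⟩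
        exact ⟨hb, htrans a ha e he b hb (hsymm _ _ hh) h1⟩
      · rintro ⟨hb, h1⟩
        exact ⟨hb, htrans e he a ha b hb hh h1⟩
  have hneg : ∀ k : ℕ → ℝ, ∑ e ∈ L, k e = 0 → ∑ x ∈ B, qf S k x ≤ 0 := by
    intro k hk
    rw [← h.wquad]
    have hLU : L ⊆ U \ S := Finset.filter_subset _ _
    have e1 : ∑ e ∈ U \ S, ∑ a ∈ U \ S, wt B e a * k e * k a
        = ∑ e ∈ L, ∑ a ∈ L, wt B e a * k e * k a := by
      rw [← Finset.sum_subset hLU]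
      · refine Finset.sum_congr rfl fun e he => (Finset.sum_subset hLU ?_).symm
        intro a ha haL
        rw [hwt0 e (hLU he) a ha (fun h => haL h.2)]; ring
      · intro e he heL
        refine Finset.sum_eq_zero fun a ha => ?_
        rw [hwt0 e he a ha (fun h => heL h.1)]; ring
    have e2 : ∑ e ∈ L, ∑ a ∈ L, wt B e a * k e * k a
        = (∑ e ∈ L, k e) ^ 2 - ∑ e ∈ L, ∑ a ∈ L, if c e = c a then k e * k a else 0 := by
      rw [sq, Finset.sum_mul_sum, ← Finset.sum_sub_distrib]
      refine Finset.sum_congr rfl fun e he => ?_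
      rw [← Finset.sum_sub_distrib]
      refine Finset.sum_congr rfl fun a ha => ?_
      rw [hwt e he a ha]
      simp only [hc e he a ha]
      split_ifs <;> ring
    rw [e1, e2, hk]
    have := psd_classes L c k
    linarith
  rcases Finset.eq_empty_or_nonempty L with hLe | hLn
  · have : B = ∅ := by
      rw [Finset.eq_empty_iff_forall_notMem]
      intro x hx
      have h2 := h.card x hx
      obtain ⟨e, he⟩ := Finset.card_pos.mp (by omega : 0 < (x \ S).card)
      have : e ∈ L := Finset.mem_filter.mpr
        ⟨Finset.sdiff_subset_sdiff (h.subU x hx) le_rfl he, x, hx, (Finset.mem_sdiff.mp he).1⟩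
      rw [hLe] at this
      simp at this
    simp [this]
  have hLpos : (0 : ℝ) < L.card := by exact_mod_cast Finset.card_pos.mpr hLn
  set t := (∑ e ∈ L, g e) / L.card with ht
  have h1 := hneg (fun e => g e - t) (by
    rw [Finset.sum_sub_distrib, Finset.sum_const, nsmul_eq_mul, ht]
    field_simp; ring)
  have h2 : ∑ x ∈ B, qf S (fun e => g e - t) x
      = ∑ x ∈ B, qf S g x - 2 * t * (∑ x ∈ B, ∑ a ∈ x \ S, g a) + 2 * t ^ 2 * B.card := by
    have : ∀ x ∈ B, qf S (fun e => g e - t) x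
        = qf S g x - 2 * t * (∑ a ∈ x \ S, g a) + 2 * t ^ 2 := by
      intro x hx
      unfold qf
      have e3 : ∑ a ∈ x \ S, (g a - t) ^ 2
          = ∑ a ∈ x \ S, g a ^ 2 - 2 * t * ∑ a ∈ x \ S, g a + 2 * t ^ 2 := by
        rw [Finset.sum_congr rfl fun a _ =>
          (by ring : (g a - t) ^ 2 = g a ^ 2 - 2 * t * g a + t ^ 2),
          Finset.sum_add_distrib, Finset.sum_sub_distrib, ← Finset.mul_sum, Finset.sum_const,
          h.card x hx, nsmul_eq_mul]
        norm_num
      have e4 : ∑ a ∈ x \ S, (g a - t) = ∑ a ∈ x \ S, g a - 2 * t := by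
        rw [Finset.sum_sub_distrib, Finset.sum_const, h.card x hx, nsmul_eq_mul]; norm_num
      rw [e3, e4]; ring
    rw [Finset.sum_congr rfl this, Finset.sum_add_distrib, Finset.sum_sub_distrib,
      ← Finset.mul_sum, Finset.sum_const, nsmul_eq_mul]
    ring
  rw [h2] at h1
  have hN : (0 : ℝ) ≤ B.card := by positivity
  nlinarith [mul_nonneg hN (neg_nonneg.mpr h1),
    sq_nonneg ((∑ x ∈ B, ∑ a ∈ x \ S, g a) - 2 * B.card * t)]

lemma qf_link (S x : Finset ℕ) (g : ℕ → ℝ) :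
    ∑ e ∈ x \ S, qf (insert e S) g x = ((x \ S).card - 2) * qf S g x := by
  have : ∀ e ∈ x \ S, qf (insert e S) g x
      = qf S g x - 2 * (∑ a ∈ x \ S, g a) * g e + 2 * g e ^ 2 := by
    intro e he
    unfold qf
    rw [sum_sdiff_insert he, sum_sdiff_insert he (fun a => g a ^ 2)]
    ring
  rw [Finset.sum_congr rfl this, Finset.sum_add_distrib, Finset.sum_sub_distrib, ← Finset.mul_sum,
    ← Finset.mul_sum, Finset.sum_const, nsmul_eq_mul]
  unfold qf
  ring

lemma Exch.star (U : Finset ℕ) (r : ℕ) : ∀ (B : Finset (Finset ℕ)) (S : Finset ℕ),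
    Exch B S U (r + 2) → ∀ g : ℕ → ℝ,
    ((r : ℝ) + 2) * (B.card : ℝ) * ∑ x ∈ B, qf S g x
      ≤ ((r : ℝ) + 1) * (∑ x ∈ B, ∑ a ∈ x \ S, g a) ^ 2 := by
  induction r with
  | zero =>
    intro B S h g
    have := h.two g
    simpa using this
  | succ r ih =>
    intro B S h g
    have hN : ∀ k : ℕ → ℝ, ∑ e ∈ U \ S, ((lnk B e).card : ℝ) * k e
        = ∑ x ∈ B, ∑ a ∈ x \ S, k a := by
      intro k
      rw [h.swap (fun _ a => k a)]
      refine Finset.sum_congr rfl fun e _ => ?_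
      rw [Finset.sum_const, nsmul_eq_mul]
    have key := trickle (U \ S) (wt B) (fun e => ((r : ℝ) + 2) * (lnk B e).card)
      (wt_symm B) (wt_nonneg B)
      (by
        intro e he
        have h1 := h.wrow he (fun _ => 1)
        simp only [mul_one] at h1
        rw [h1, Finset.sum_congr rfl (fun x hx => ?_), Finset.sum_const, nsmul_eq_mul, mul_comm]
        rw [Finset.sum_const, (h.link (Finset.mem_sdiff.mp he).2).card x hx, nsmul_eq_mul]
        push_cast; ring)
      (by
        intro k hk e he a ha hwe hwa
        have hne : ∀ b : ℕ, ((r : ℝ) + 2) * (lnk B b).card ≠ 0 → ∃ x ∈ B, b ∈ x := by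
          intro b hb
          have : (lnk B b).card ≠ 0 := by
            intro h0; rw [h0] at hb; simp at hb
          obtain ⟨x, hx⟩ := Finset.card_pos.mp (Nat.pos_of_ne_zero this)
          exact ⟨x, mem_lnk.mp hx⟩
        have hadj : ∀ b ∈ U \ S, ∀ d ∈ U \ S, (∃ z ∈ B, b ∈ z ∧ d ∈ z) → k b = k d := by
          intro b hb d hd hz
          by_cases hbd : b = d
          · rw [hbd]
          refine hk b hb d hd ?_
          obtain ⟨z, hz, hbz, hdz⟩ := hz
          unfold wt
          rw [if_neg hbd]
          have : 0 < (lnk (lnk B b) d).card :=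
            Finset.card_pos.mpr ⟨z, mem_lnk.mpr ⟨mem_lnk.mpr ⟨hz, hbz⟩, hdz⟩⟩
          exact_mod_cast this.ne'
        by_cases hea : ∃ z ∈ B, e ∈ z ∧ a ∈ z
        · exact hadj e he a ha hea
        obtain ⟨x, hx, hex⟩ := hne e hwe
        obtain ⟨y, hy, hay⟩ := hne a hwa
        obtain ⟨b, hb, hbe⟩ := Finset.exists_mem_ne
          (by rw [h.card x hx]; omega : 1 < (x \ S).card) e
        have hbU : b ∈ U \ S := Finset.sdiff_subset_sdiff (h.subU x hx) le_rfl hb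
        have hbx : b ∈ x := (Finset.mem_sdiff.mp hb).1
        rw [hadj e he b hbU ⟨x, hx, hex, hbx⟩,
          hadj a ha b hbU (h.par hx hy hex hbx hbe.symm hay hea)])
      (by
        intro k
        rw [h.wquad]
        have h1 : ∑ e ∈ U \ S, ∑ x ∈ lnk B e, qf (insert e S) k x
            = ((r : ℝ) + 1) * ∑ x ∈ B, qf S k x := by
          rw [← h.swap (fun x e => qf (insert e S) k x), Finset.mul_sum]
          refine Finset.sum_congr rfl fun x hx => ?_
          rw [qf_link, h.card x hx]
          push_cast; ring
        have h2 : ∑ e ∈ U \ S, ∑ x ∈ lnk B e, qf (insert e S) k x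
            ≤ ∑ e ∈ U \ S, ((r : ℝ) + 1) * ((∑ a ∈ U \ S, wt B e a * k a) ^ 2
              / (((r : ℝ) + 2) * (lnk B e).card)) := by
          refine Finset.sum_le_sum fun e he => ?_
          have h3 := ih (lnk B e) (insert e S) (h.link (Finset.mem_sdiff.mp he).2) k
          rw [h.wrow he]
          rcases Nat.eq_zero_or_pos (lnk B e).card with h0 | hpos
          · rw [Finset.card_eq_zero.mp h0]; simp
          · have hpos' : (0 : ℝ) < (lnk B e).card := by exact_mod_cast hpos
            rw [← mul_div_assoc, le_div_iff₀ (by positivity)]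
            linarith
        rw [h1, ← Finset.mul_sum] at h2
        exact le_of_mul_le_mul_left h2 (by positivity))
      g
    rw [h.wquad] at key
    have e1 : ∑ e ∈ U \ S, ((r : ℝ) + 2) * (lnk B e).card * g e
        = ((r : ℝ) + 2) * ∑ x ∈ B, ∑ a ∈ x \ S, g a := by
      rw [← hN, Finset.mul_sum]
      exact Finset.sum_congr rfl fun e _ => by ring
    have e2 : ∑ e ∈ U \ S, ((r : ℝ) + 2) * (lnk B e).card
        = ((r : ℝ) + 2) * (((r : ℝ) + 3) * B.card) := by
      have := hN (fun _ => 1)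
      simp only [mul_one] at this
      rw [← Finset.mul_sum, this, Finset.sum_congr rfl fun x hx => by
        rw [Finset.sum_const, h.card x hx], Finset.sum_const]
      simp only [nsmul_eq_mul]
      push_cast; ring
    rw [e1, e2] at key
    have hr : (0 : ℝ) < (r : ℝ) + 2 := by positivity
    have : ((r : ℝ) + 2) * (((r : ℝ) + 3) * B.card * ∑ x ∈ B, qf S g x)
        ≤ ((r : ℝ) + 2) * (((r : ℝ) + 2) * (∑ x ∈ B, ∑ a ∈ x \ S, g a) ^ 2) := by
      linarith
    have := le_of_mul_le_mul_left this hr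
    push_cast
    linarith

/-- Unnormalized variance over a finite family. -/
noncomputable def vr (B : Finset (Finset ℕ)) (f : Finset ℕ → ℝ) : ℝ :=
  ∑ x ∈ B, f x ^ 2 - (∑ x ∈ B, f x) ^ 2 / B.card

/-- Unnormalized energy over ordered pairs. -/
noncomputable def en (B : Finset (Finset ℕ)) (f : Finset ℕ → ℝ) : ℝ :=
  ∑ x ∈ B, ∑ y ∈ B, if (x \ y).card = 1 ∧ (y \ x).card = 1 then (f x - f y) ^ 2 else 0

lemma Exch.vr_link {B : Finset (Finset ℕ)} {S U : Finset ℕ} {r : ℕ} (h : Exch B S U (r + 2))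
    (f : Finset ℕ → ℝ) : ((r : ℝ) + 1) * vr B f ≤ ∑ e ∈ U \ S, vr (lnk B e) f := by
  rcases Finset.eq_empty_or_nonempty B with rfl | hB
  · simp [vr, lnk]
  have hNpos : (0 : ℝ) < B.card := by exact_mod_cast Finset.card_pos.mpr hB
  set N : ℝ := (B.card : ℝ) with hN
  set Φ := ∑ x ∈ B, f x with hΦ
  set g : ℕ → ℝ := fun e => (∑ x ∈ lnk B e, f x) / (lnk B e).card with hg
  set T := ∑ e ∈ U \ S, (∑ x ∈ lnk B e, f x) ^ 2 / (lnk B e).card with hT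
  have hNg : ∀ e, ((lnk B e).card : ℝ) * g e = ∑ x ∈ lnk B e, f x := by
    intro e
    rcases Nat.eq_zero_or_pos (lnk B e).card with h0 | hpos
    · rw [Finset.card_eq_zero.mp h0]; simp
    · have hpos' : (0 : ℝ) < (lnk B e).card := by exact_mod_cast hpos
      simp only [hg]; field_simp
  have hconst : ∀ k : Finset ℕ → ℝ, ∑ e ∈ U \ S, ∑ x ∈ lnk B e, k x
      = ((r : ℝ) + 2) * ∑ x ∈ B, k x := by
    intro k
    rw [← h.swap (fun x _ => k x), Finset.mul_sum]
    refine Finset.sum_congr rfl fun x hx => ?_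
    rw [Finset.sum_const, h.card x hx, nsmul_eq_mul]; push_cast; ring
  have h1 : ∑ e ∈ U \ S, vr (lnk B e) f = ((r : ℝ) + 2) * ∑ x ∈ B, f x ^ 2 - T := by
    unfold vr
    rw [Finset.sum_sub_distrib, hconst]
  have hG1 : ∑ x ∈ B, ∑ a ∈ x \ S, g a = ((r : ℝ) + 2) * Φ := by
    rw [h.swap (fun _ a => g a), ← hconst]
    refine Finset.sum_congr rfl fun e _ => ?_
    rw [Finset.sum_const, nsmul_eq_mul, hNg]
  have hG2 : ∑ x ∈ B, ∑ a ∈ x \ S, g a ^ 2 = T := by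
    rw [h.swap (fun _ a => g a ^ 2)]
    refine Finset.sum_congr rfl fun e _ => ?_
    rw [Finset.sum_const, nsmul_eq_mul, sq, ← mul_assoc, hNg, sq, mul_div_assoc]
  have hG3 : ∑ x ∈ B, f x * ∑ a ∈ x \ S, g a = T := by
    rw [Finset.sum_congr rfl fun x _ => Finset.mul_sum (x \ S) g (f x),
      h.swap (fun x a => f x * g a)]
    refine Finset.sum_congr rfl fun e _ => ?_
    rw [← Finset.sum_mul, sq, mul_div_assoc]
  have hst := Exch.star U r B S h g
  have hq : ∑ x ∈ B, qf S g x = ∑ x ∈ B, (∑ a ∈ x \ S, g a) ^ 2 - T := by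
    rw [← hG2, ← Finset.sum_sub_distrib]; rfl
  rw [hq, hG1] at hst
  set G2 := ∑ x ∈ B, (∑ a ∈ x \ S, g a) ^ 2 with hG2'
  set c := ((r : ℝ) + 1) * Φ / N with hc
  have hcN : c * N = ((r : ℝ) + 1) * Φ := by rw [hc]; field_simp
  have hsq : 0 ≤ ∑ x ∈ B, (f x - ∑ a ∈ x \ S, g a + c) ^ 2 :=
    Finset.sum_nonneg fun _ _ => sq_nonneg _
  have hexp : ∑ x ∈ B, (f x - ∑ a ∈ x \ S, g a + c) ^ 2
      = ∑ x ∈ B, f x ^ 2 - 2 * T + G2 + 2 * c * (Φ - ((r : ℝ) + 2) * Φ) + N * c ^ 2 := by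
    rw [← hG1, ← hG3, hG2', hΦ, hN]
    rw [Finset.sum_congr rfl fun x _ => (by ring : (f x - ∑ a ∈ x \ S, g a + c) ^ 2
      = f x ^ 2 - 2 * (f x * ∑ a ∈ x \ S, g a) + (∑ a ∈ x \ S, g a) ^ 2
        + 2 * c * (f x - ∑ a ∈ x \ S, g a) + c ^ 2)]
    simp only [Finset.sum_add_distrib, Finset.sum_sub_distrib, ← Finset.mul_sum, Finset.sum_const,
      nsmul_eq_mul]
  have hst2 : G2 - T ≤ ((r : ℝ) + 2) * c * Φ := by
    have h5 : ((r : ℝ) + 2) * N * (G2 - T) ≤ ((r : ℝ) + 2) * N * (((r : ℝ) + 2) * c * Φ) := by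
      refine hst.trans_eq ?_
      have : ((r : ℝ) + 2) * N * (((r : ℝ) + 2) * c * Φ)
        = ((r : ℝ) + 2) ^ 2 * (c * N) * Φ := by ring
      rw [this, hcN]; ring
    exact le_of_mul_le_mul_left h5 (by positivity)
  rw [h1]
  unfold vr
  rw [← hΦ, ← hN]
  have h6 : ((r : ℝ) + 1) * (Φ ^ 2 / N) = c * Φ := by rw [hc]; ring
  rw [mul_sub, h6]
  have h7 : N * c ^ 2 = c * (((r : ℝ) + 1) * Φ) := by rw [← hcN]; ring
  rw [hexp, h7] at hsq
  linarith

lemma Exch.en_link {B : Finset (Finset ℕ)} {S U : Finset ℕ} {r : ℕ} (h : Exch B S U (r + 2))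
    (f : Finset ℕ → ℝ) : ∑ e ∈ U \ S, en (lnk B e) f = ((r : ℝ) + 1) * en B f := by
  unfold en
  have h1 : ∀ e ∈ U \ S, (∑ x ∈ lnk B e, ∑ y ∈ lnk B e,
      if (x \ y).card = 1 ∧ (y \ x).card = 1 then (f x - f y) ^ 2 else 0)
      = ∑ x ∈ lnk B e, ∑ y ∈ B, if e ∈ y then
      (if (x \ y).card = 1 ∧ (y \ x).card = 1 then (f x - f y) ^ 2 else 0) else 0 := by
    intro e _
    refine Finset.sum_congr rfl fun x _ => ?_
    rw [lnk, Finset.sum_filter]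
  rw [Finset.sum_congr rfl h1, ← h.swap (fun x e => ∑ y ∈ B, if e ∈ y then
      (if (x \ y).card = 1 ∧ (y \ x).card = 1 then (f x - f y) ^ 2 else 0) else 0), Finset.mul_sum]
  refine Finset.sum_congr rfl fun x hx => ?_
  rw [Finset.sum_comm, Finset.mul_sum]
  refine Finset.sum_congr rfl fun y hy => ?_
  rw [← Finset.sum_filter, Finset.sum_const, nsmul_eq_mul]
  by_cases hc : (x \ y).card = 1 ∧ (y \ x).card = 1
  · have h2 : ((x \ S).filter fun e => e ∈ y).card = r + 1 := by
      have h3 := Finset.card_filter_add_card_filter_not (s := x \ S) (fun e => e ∈ y)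
      have h4 : ((x \ S).filter fun e => ¬ e ∈ y) = x \ y := by
        ext a
        simp only [Finset.mem_filter, Finset.mem_sdiff]
        constructor
        · rintro ⟨⟨h1, _⟩, h2⟩; exact ⟨h1, h2⟩
        · rintro ⟨h1, h2⟩; exact ⟨⟨h1, fun hS => h2 (h.sub y hy hS)⟩, h2⟩
      rw [h4, h.card x hx, hc.1] at h3
      omega
    rw [h2]; push_cast; rfl
  · simp [hc]

lemma en_nonneg (B : Finset (Finset ℕ)) (f : Finset ℕ → ℝ) : 0 ≤ en B f :=
  Finset.sum_nonneg fun _ _ => Finset.sum_nonneg fun _ _ => by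
    split_ifs
    · exact sq_nonneg _
    · exact le_rfl

lemma vr_small {B : Finset (Finset ℕ)} (f : Finset ℕ → ℝ) (hB : B.card ≤ 1) : vr B f = 0 := by
  rcases Finset.eq_empty_or_nonempty B with rfl | hne
  · simp [vr]
  · have := Finset.card_pos.mpr hne
    obtain ⟨x, rfl⟩ := Finset.card_eq_one.mp (by omega : B.card = 1)
    simp [vr]

lemma Exch.gap (U : Finset ℕ) (f : Finset ℕ → ℝ) (r : ℕ) :
    ∀ (B : Finset (Finset ℕ)) (S : Finset ℕ), Exch B S U r → 4 * vr B f ≤ en B f := by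
  induction r with
  | zero =>
    intro B S h
    rw [vr_small f, mul_zero]
    · exact en_nonneg B f
    · rw [Finset.card_le_one]
      have : ∀ x ∈ B, x = S := fun x hx => by
        have := Finset.card_eq_zero.mp (h.card x hx)
        exact le_antisymm (Finset.sdiff_eq_empty_iff_subset.mp this) (h.sub x hx)
      intro x hx y hy
      rw [this x hx, this y hy]
  | succ r ih =>
    intro B S h
    rcases r with _ | r
    · by_cases hB : B.card ≤ 1
      · rw [vr_small f hB, mul_zero]; exact en_nonneg B f
      have hN : (2 : ℝ) ≤ B.card := by exact_mod_cast (by omega : 2 ≤ B.card)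
      have hd : ∀ x ∈ B, ∀ y ∈ B, x ≠ y → (x \ y).card = 1 := by
        intro x hx y hy hxy
        have h1 : x \ y ⊆ x \ S := Finset.sdiff_subset_sdiff le_rfl (h.sub y hy)
        have h2 := Finset.card_le_card h1
        rw [h.card x hx] at h2
        have h3 : x \ y ≠ ∅ := by
          intro h0
          have hxy' := Finset.sdiff_eq_empty_iff_subset.mp h0
          have hx2 := Finset.card_sdiff_add_card_eq_card (h.sub x hx)
          have hy2 := Finset.card_sdiff_add_card_eq_card (h.sub y hy)
          rw [h.card x hx] at hx2
          rw [h.card y hy] at hy2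
          exact hxy (Finset.eq_of_subset_of_card_le hxy' (by omega))
        have := Finset.card_pos.mpr (Finset.nonempty_iff_ne_empty.mpr h3)
        omega
      have hen : en B f = 2 * B.card * ∑ x ∈ B, f x ^ 2 - 2 * (∑ x ∈ B, f x) ^ 2 := by
        have h1 : ∀ x ∈ B, ∀ y ∈ B,
            (if (x \ y).card = 1 ∧ (y \ x).card = 1 then (f x - f y) ^ 2 else 0)
            = f x ^ 2 + f y ^ 2 - 2 * (f x * f y) := by
          intro x hx y hy
          by_cases hxy : x = y
          · subst hxy; simp; ring
          · rw [if_pos ⟨hd x hx y hy hxy, hd y hy x hx (Ne.symm hxy)⟩]; ring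
        unfold en
        rw [Finset.sum_congr rfl fun x hx => Finset.sum_congr rfl (h1 x hx)]
        simp only [Finset.sum_sub_distrib, Finset.sum_add_distrib, ← Finset.mul_sum,
          Finset.sum_const, nsmul_eq_mul]
        rw [← Finset.sum_mul]; ring
      have hv : en B f = 2 * B.card * vr B f := by
        rw [hen]; unfold vr
        have : (B.card : ℝ) ≠ 0 := by linarith
        field_simp
      have hvn : 0 ≤ vr B f := by
        have := en_nonneg B f
        rw [hv] at this
        by_contra hc
        nlinarith
      rw [hv]
      nlinarith
    · have h1 := h.vr_link f
      have h2 := h.en_link f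
      have h3 : ∑ e ∈ U \ S, 4 * vr (lnk B e) f ≤ ∑ e ∈ U \ S, en (lnk B e) f :=
        Finset.sum_le_sum fun e he =>
          ih (lnk B e) (insert e S) (h.link (Finset.mem_sdiff.mp he).2)
      rw [h2, ← Finset.mul_sum] at h3
      have h4 : ((r : ℝ) + 1) * (4 * vr B f) ≤ ((r : ℝ) + 1) * en B f := by linarith
      exact le_of_mul_le_mul_left h4 (by positivity)

lemma dyck_exch (n : ℕ) : Exch (dyck n) ∅ (Finset.Icc 1 (2 * n)) n where
  sub x _ := Finset.empty_subset x
  subU x hx := by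
    simp only [dyck, Finset.mem_filter, Finset.mem_powerset] at hx
    exact hx.1
  card x hx := by
    simp only [dyck, Finset.mem_filter, Finset.mem_powerset] at hx
    simpa using hx.2.1
  ex x hx y hy a ha := by
    simp only [dyck, Finset.mem_filter, Finset.mem_powerset] at hx hy
    obtain ⟨hxU, hxn, hxk⟩ := hx
    obtain ⟨hyU, hyn, hyk⟩ := hy
    obtain ⟨hay, hax⟩ := Finset.mem_sdiff.mp ha
    have hne : (x \ y).Nonempty := by
      rw [Finset.nonempty_iff_ne_empty]
      intro h0
      have hs := Finset.sdiff_eq_empty_iff_subset.mp h0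
      have := Finset.eq_of_subset_of_card_le hs (by omega)
      rw [this] at hax
      exact hax hay
    set b := (x \ y).max' hne with hb
    have hbm : b ∈ x \ y := Finset.max'_mem _ hne
    obtain ⟨hbx, hby⟩ := Finset.mem_sdiff.mp hbm
    have hmax : ∀ c ∈ x, b < c → c ∈ y := by
      intro c hc hbc
      by_contra hcy
      have := Finset.le_max' (x \ y) c (Finset.mem_sdiff.mpr ⟨hc, hcy⟩)
      omega
    have hab : a ≠ b := fun h => hax (h ▸ hbx)
    have hae : a ∉ x.erase b := fun h => hax (Finset.mem_of_mem_erase h)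
    refine ⟨b, hbm, ?_⟩
    simp only [dyck, Finset.mem_filter, Finset.mem_powerset]
    refine ⟨?_, ?_, ?_⟩
    · exact Finset.insert_subset (hyU hay) ((Finset.erase_subset _ _).trans hxU)
    · rw [Finset.card_insert_of_notMem hae, Finset.card_erase_of_mem hbx]
      have := Finset.card_pos.mpr ⟨b, hbx⟩
      omega
    · intro k hk
      have hk1 := hxk k hk
      have hk2 := hyk k hk
      have ha1 := Finset.mem_Icc.mp (hyU hay)
      have hb1 := Finset.mem_Icc.mp (hxU hbx)
      by_cases hak : a ≤ k
      · -- the new up-step is counted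
        have h1 : insert a ((x ∩ Finset.Icc 1 k).erase b)
            ⊆ insert a (x.erase b) ∩ Finset.Icc 1 k := by
          intro c hc
          simp only [Finset.mem_insert, Finset.mem_erase, Finset.mem_inter, Finset.mem_Icc] at hc ⊢
          rcases hc with rfl | hc
          · exact ⟨Or.inl rfl, ha1.1, hak⟩
          · exact ⟨Or.inr ⟨hc.1, hc.2.1⟩, hc.2.2⟩
        have h2 := Finset.card_le_card h1
        rw [Finset.card_insert_of_notMem (by simp [hax])] at h2
        have h3 := Finset.pred_card_le_card_erase (s := x ∩ Finset.Icc 1 k) (a := b)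
        omega
      · by_cases hbk : b ≤ k
        · -- compare with the path `y` beyond `k`
          have hxs := Finset.card_inter_add_card_sdiff x (Finset.Icc 1 k)
          have hys := Finset.card_inter_add_card_sdiff y (Finset.Icc 1 k)
          have h1 : insert a (x \ Finset.Icc 1 k) ⊆ y \ Finset.Icc 1 k := by
            intro c hc
            simp only [Finset.mem_insert, Finset.mem_sdiff, Finset.mem_Icc] at hc ⊢
            rcases hc with rfl | ⟨hc1, hc2⟩
            · exact ⟨hay, fun h => hak h.2⟩
            · refine ⟨hmax c hc1 ?_, hc2⟩
              have := Finset.mem_Icc.mp (hxU hc1)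
              omega
          have h2 := Finset.card_le_card h1
          rw [Finset.card_insert_of_notMem (by simp [hax])] at h2
          have h3 : (x ∩ Finset.Icc 1 k).erase b ⊆ insert a (x.erase b) ∩ Finset.Icc 1 k := by
            intro c hc
            simp only [Finset.mem_insert, Finset.mem_erase, Finset.mem_inter,
              Finset.mem_Icc] at hc ⊢
            exact ⟨Or.inr ⟨hc.1, hc.2.1⟩, hc.2.2⟩
          have h4 := Finset.card_le_card h3
          have h5 := Finset.pred_card_le_card_erase (s := x ∩ Finset.Icc 1 k) (a := b)
          omega
        · have h3 : x ∩ Finset.Icc 1 k ⊆ insert a (x.erase b) ∩ Finset.Icc 1 k := by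
            intro c hc
            simp only [Finset.mem_insert, Finset.mem_erase, Finset.mem_inter,
              Finset.mem_Icc] at hc ⊢
            refine ⟨Or.inr ⟨?_, hc.1⟩, hc.2⟩
            omega
          have h4 := Finset.card_le_card h3
          omega

/-- Poincaré inequality for the Dyck random transposition chain: the spectral
gap is at least `1/n²`, i.e. `𝓔(f,f) ≥ (1/n²)·Var_π(f)` for all `f`. -/
theorem dyck_poincare (n : ℕ) (hn : 1 ≤ n) (f : Finset ℕ → ℝ) :
    dyckDirichlet n f ≥ (1 / (n : ℝ) ^ 2) * dyckVar n f := by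
  have hgap := Exch.gap _ f n _ _ (dyck_exch n)
  have hE : dyckDirichlet n f
      = (1 / 2) * ((1 / (2 * (n : ℝ) ^ 2)) * dyckPi n * en (dyck n) f) := by
    unfold dyckDirichlet en
    congr 1
    rw [Finset.mul_sum]
    refine Finset.sum_congr rfl fun x _ => ?_
    rw [Finset.mul_sum]
    refine Finset.sum_congr rfl fun y _ => ?_
    unfold dyckP dyckStep
    by_cases hxy : x = y
    · subst hxy; simp
    · rw [if_neg hxy]
      split_ifs <;> ring
  have hV : dyckVar n f = dyckPi n * vr (dyck n) f := by
    unfold dyckVar vr dyckPi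
    rw [← Finset.sum_mul, ← Finset.sum_mul]
    by_cases h0 : ((dyck n).card : ℝ) = 0
    · simp [h0]
    · field_simp
  rw [hE, hV, ge_iff_le]
  have hn' : (0 : ℝ) < n := by exact_mod_cast hn
  have hpi : 0 ≤ dyckPi n := by unfold dyckPi; positivity
  have hc : 0 ≤ 1 / (4 * (n : ℝ) ^ 2) * dyckPi n := by positivity
  have h1 := mul_le_mul_of_nonneg_left hgap hc
  calc 1 / (n : ℝ) ^ 2 * (dyckPi n * vr (dyck n) f)
      = 1 / (4 * (n : ℝ) ^ 2) * dyckPi n * (4 * vr (dyck n) f) := by field_simp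
    _ ≤ _ := h1
    _ = _ := by field_simp; ring
end

section
/- Logarithmic Sobolev inequality for the Dyck random transposition chain (log-Sobolev constant at least 1/(4n²)): for every n ≥ 1 and every function f : 𝓓(n) → ℝ that is not identically zero, 𝓔(f,f) ≥ (1/(4n²)) · 𝓛_π(f). -/
open scoped Classical

/-- The entropy functional `𝓛_π(f)` for the uniform distribution on `𝓓(n)`. -/
noncomputable def dyckEnt (n : ℕ) (f : Finset ℕ → ℝ) : ℝ :=
  ∑ x ∈ dyck n,
    f x ^ 2 * (Real.log (f x ^ 2) - Real.log (∑ y ∈ dyck n, f y ^ 2 * dyckPi n)) *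
      dyckPi n


/-- Ballot paths of length `N` with `k` up-steps. -/
noncomputable def BL (N k : ℕ) : Finset (Finset ℕ) :=
  (Finset.Icc 1 N).powerset.filter fun S =>
    S.card = k ∧ ∀ j ∈ Finset.Icc 1 N, j ≤ 2 * (S ∩ Finset.Icc 1 j).card

lemma mem_BL {N k : ℕ} {S : Finset ℕ} : S ∈ BL N k ↔
    S ⊆ Finset.Icc 1 N ∧ S.card = k ∧ ∀ j, 1 ≤ j → j ≤ N → j ≤ 2 * (S ∩ Finset.Icc 1 j).card := by
  simp [BL, and_imp]

lemma BL_not_mem {N k : ℕ} {S : Finset ℕ} (h : S ∈ BL N k) : N + 1 ∉ S := by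
  intro h1
  have := (mem_BL.1 h).1 h1
  simp at this

lemma BL_empty {N k : ℕ} (h : 2 * k < N) : BL N k = ∅ := by
  apply Finset.eq_empty_of_forall_notMem
  intro S hS
  obtain ⟨h1, h2, h3⟩ := mem_BL.1 hS
  have := h3 N (by omega) le_rfl
  rw [Finset.inter_eq_left.2 h1] at this
  omega

lemma insert_inter_Icc {N j : ℕ} (S : Finset ℕ) (hj : j ≤ N) :
    insert (N + 1) S ∩ Finset.Icc 1 j = S ∩ Finset.Icc 1 j := by
  ext a
  simp only [Finset.mem_inter, Finset.mem_insert, Finset.mem_Icc]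
  constructor
  · rintro ⟨h1 | h1, h2⟩
    · omega
    · exact ⟨h1, h2⟩
  · rintro ⟨h1, h2⟩
    exact ⟨Or.inr h1, h2⟩

lemma mem_BL_succ_not {N k : ℕ} {S : Finset ℕ} (hk : N + 1 ≤ 2 * k) (hS : N + 1 ∉ S) :
    S ∈ BL (N + 1) k ↔ S ∈ BL N k := by
  rw [mem_BL, mem_BL]
  constructor
  · rintro ⟨h1, h2, h3⟩
    refine ⟨?_, h2, fun j a b => h3 j a (by omega)⟩
    intro x hx
    have := h1 hx
    simp only [Finset.mem_Icc] at this ⊢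
    have : x ≠ N + 1 := fun h => hS (h ▸ hx)
    omega
  · rintro ⟨h1, h2, h3⟩
    have h4 : S ⊆ Finset.Icc 1 (N + 1) := h1.trans (Finset.Icc_subset_Icc le_rfl (by omega))
    refine ⟨h4, h2, fun j a b => ?_⟩
    rcases Nat.lt_or_ge N j with h | h
    · have : j = N + 1 := by omega
      subst this
      rw [Finset.inter_eq_left.2 h4]
      omega
    · exact h3 j a h

lemma insert_mem_BL_succ {N k : ℕ} {S : Finset ℕ} (hk : N + 1 ≤ 2 * (k + 1)) (hS : N + 1 ∉ S) :
    insert (N + 1) S ∈ BL (N + 1) (k + 1) ↔ S ∈ BL N k := by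
  rw [mem_BL, mem_BL, Finset.card_insert_of_notMem hS]
  constructor
  · rintro ⟨h1, h2, h3⟩
    refine ⟨?_, by omega, fun j a b => ?_⟩
    · intro x hx
      have := h1 (Finset.mem_insert_of_mem hx)
      simp only [Finset.mem_Icc] at this ⊢
      have : x ≠ N + 1 := fun h => hS (h ▸ hx)
      omega
    · have := h3 j a (by omega)
      rwa [insert_inter_Icc S b] at this
  · rintro ⟨h1, h2, h3⟩
    have h4 : insert (N + 1) S ⊆ Finset.Icc 1 (N + 1) := by
      apply Finset.insert_subset (by simp)
      exact h1.trans (Finset.Icc_subset_Icc le_rfl (by omega))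
    refine ⟨h4, by omega, fun j a b => ?_⟩
    rcases Nat.lt_or_ge N j with h | h
    · have : j = N + 1 := by omega
      subst this
      rw [Finset.inter_eq_left.2 h4, Finset.card_insert_of_notMem hS]
      omega
    · rw [insert_inter_Icc S h]
      exact h3 j a h

lemma BL_succ {N k : ℕ} (hk : N + 1 ≤ 2 * (k + 1)) :
    BL (N + 1) (k + 1) = BL N (k + 1) ∪ (BL N k).image (insert (N + 1)) := by
  ext S
  rw [Finset.mem_union, Finset.mem_image]
  by_cases h : N + 1 ∈ S
  · constructor
    · intro h1
      right
      refine ⟨S.erase (N + 1), ?_, Finset.insert_erase h⟩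
      rw [← insert_mem_BL_succ hk (Finset.notMem_erase _ _), Finset.insert_erase h]
      exact h1
    · rintro (h1 | ⟨T, hT, rfl⟩)
      · exact absurd h (BL_not_mem h1)
      · exact (insert_mem_BL_succ hk (BL_not_mem hT)).2 hT
  · constructor
    · intro h1
      exact Or.inl ((mem_BL_succ_not hk h).1 h1)
    · rintro (h1 | ⟨T, hT, rfl⟩)
      · exact (mem_BL_succ_not hk h).2 h1
      · simp at h

lemma sum_BL_succ {M : Type*} [AddCommMonoid M] {N k : ℕ} (hk : N + 1 ≤ 2 * (k + 1))
    (g : Finset ℕ → M) :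
    ∑ S ∈ BL (N + 1) (k + 1), g S
      = ∑ S ∈ BL N (k + 1), g S + ∑ S ∈ BL N k, g (insert (N + 1) S) := by
  rw [BL_succ hk, Finset.sum_union, Finset.sum_image]
  · intro x hx y hy h
    have h1 := BL_not_mem hx
    have h2 := BL_not_mem hy
    rw [← Finset.erase_insert h1, ← Finset.erase_insert h2]
    rw [h]
  · rw [Finset.disjoint_left]
    intro S h1 h2
    obtain ⟨T, _, rfl⟩ := Finset.mem_image.1 h2
    exact BL_not_mem h1 (Finset.mem_insert_self _ _)

lemma card_BL_succ {N k : ℕ} (hk : N + 1 ≤ 2 * (k + 1)) :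
    (BL (N + 1) (k + 1)).card = (BL N (k + 1)).card + (BL N k).card := by
  have := sum_BL_succ hk (fun _ => 1)
  simpa using this

lemma BL_zero_zero : BL 0 0 = {∅} := by
  ext S
  rw [mem_BL]
  constructor
  · rintro ⟨h, -⟩
    simpa using h
  · intro h
    have : S = ∅ := by simpa using h
    subst this
    refine ⟨by simp, by simp, fun j a b => by omega⟩

lemma BL_zero_succ (k : ℕ) : BL 0 (k + 1) = ∅ := by
  apply Finset.eq_empty_of_forall_notMem
  intro S hS
  obtain ⟨h1, h2, h3⟩ := mem_BL.1 hS
  have : S = ∅ := by simpa using h1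
  subst this
  simp at h2

/-- Log-concavity of ballot numbers. -/
lemma BL_logconcave (N : ℕ) : ∀ i j : ℕ, i ≤ j →
    (BL N i).card * (BL N (j + 1)).card ≤ (BL N (i + 1)).card * (BL N j).card := by
  induction N with
  | zero =>
    intro i j _
    rw [BL_zero_succ]
    simp
  | succ N ih =>
    intro i j hij
    by_cases h : 2 * i < N + 1
    · rw [BL_empty h]; simp
    obtain ⟨i, rfl⟩ : ∃ i', i = i' + 1 := ⟨i - 1, by omega⟩
    obtain ⟨j, rfl⟩ : ∃ j', j = j' + 1 := ⟨j - 1, by omega⟩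
    rw [card_BL_succ (by omega), card_BL_succ (by omega), card_BL_succ (by omega),
      card_BL_succ (by omega)]
    have h1 := ih i j (by omega)
    have h2 := ih (i + 1) (j + 1) (by omega)
    have h3 : (BL N i).card * (BL N (j + 2)).card ≤ (BL N (i + 2)).card * (BL N j).card := by
      rcases Nat.lt_or_ge i j with h | h
      · exact (ih i (j + 1) (by omega)).trans (ih (i + 1) j (by omega))
      · have : i = j := by omega
        subst this
        rw [mul_comm]
    simp only [add_assoc] at *
    norm_num at *
    nlinarith

/-- Monotone coupling between consecutive levels. -/
lemma BL_coupling (N : ℕ) : ∀ k : ℕ, ∃ w : Finset ℕ → Finset ℕ → ℝ,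
    (∀ x y, 0 ≤ w x y) ∧
    (∀ x ∈ BL N (k + 1), ∀ y ∈ BL N k, w x y ≠ 0 → y ⊆ x) ∧
    (∀ x ∈ BL N (k + 1), ∑ y ∈ BL N k, w x y = (BL N k).card) ∧
    (∀ y ∈ BL N k, ∑ x ∈ BL N (k + 1), w x y = (BL N (k + 1)).card) := by
  induction N with
  | zero =>
    intro k
    refine ⟨fun _ _ => 0, by simp, by simp, ?_, ?_⟩
    · rw [BL_zero_succ]; simp
    · rw [BL_zero_succ]; simp
  | succ N ih =>
    intro k
    by_cases h0 : BL (N + 1) k = ∅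
    · refine ⟨fun _ _ => 0, by simp, by simp, ?_, ?_⟩ <;> simp [h0]
    by_cases h0' : BL (N + 1) (k + 1) = ∅
    · refine ⟨fun _ _ => 0, by simp, by simp, ?_, ?_⟩ <;> simp [h0']
    have hk : N + 1 ≤ 2 * k := by
      by_contra h
      exact h0 (BL_empty (by omega))
    obtain ⟨k, rfl⟩ : ∃ i', k = i' + 1 := ⟨k - 1, by omega⟩
    obtain ⟨w1, hw1, hs1, hx1, hy1⟩ := ih k
    obtain ⟨w2, hw2, hs2, hx2, hy2⟩ := ih (k + 1)
    have hcA := card_BL_succ hk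
    have hcC := card_BL_succ (N := N) (k := k + 1) (by omega)
    have hlc := BL_logconcave N k (k + 1) (by omega)
    have hp0 : 0 < (BL (N + 1) (k + 1)).card := by
      rw [Finset.card_pos]; exact Finset.nonempty_iff_ne_empty.2 h0
    have hp1 : 0 < (BL (N + 1) (k + 1 + 1)).card := by
      rw [Finset.card_pos]; exact Finset.nonempty_iff_ne_empty.2 h0'
    have hB : 0 < (BL N (k + 1)).card := by
      rcases Nat.eq_zero_or_pos (BL N (k + 1)).card with h | h
      · rw [h] at hlc hcA hcC
        have : 0 < (BL N k).card * (BL N (k + 1 + 1)).card := Nat.mul_pos (by omega) (by omega)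
        omega
      · exact h
    have hcA' : ((BL (N + 1) (k + 1)).card : ℝ) = (BL N (k + 1)).card + (BL N k).card := by
      exact_mod_cast hcA
    have hcC' : ((BL (N + 1) (k + 1 + 1)).card : ℝ)
        = (BL N (k + 1 + 1)).card + (BL N (k + 1)).card := by
      exact_mod_cast hcC
    have hlc' : ((BL N k).card : ℝ) * (BL N (k + 1 + 1)).card
        ≤ (BL N (k + 1)).card * (BL N (k + 1)).card := by exact_mod_cast hlc
    have hB' : (0 : ℝ) < (BL N (k + 1)).card := by exact_mod_cast hB
    rw [hcA', hcC']
    have hA0 : (0 : ℝ) ≤ (BL N k).card := by positivity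
    have hC0 : (0 : ℝ) ≤ (BL N (k + 1 + 1)).card := by positivity
    generalize ((BL N k).card : ℝ) = A at *
    generalize ((BL N (k + 1)).card : ℝ) = B at *
    generalize ((BL N (k + 1 + 1)).card : ℝ) = C at *
    have hγ : 0 ≤ B - A * C / B := by
      rw [sub_nonneg, div_le_iff₀ hB']; exact hlc'
    let w : Finset ℕ → Finset ℕ → ℝ := fun x y =>
      if N + 1 ∈ x then
        (if N + 1 ∈ y then (B + C) / B * w1 (x.erase (N + 1)) (y.erase (N + 1))
          else if x.erase (N + 1) = y then B - A * C / B else 0)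
      else if N + 1 ∈ y then 0 else (A + B) / B * w2 x y
    have wUU : ∀ x y, N + 1 ∉ x → N + 1 ∉ y →
        w (insert (N + 1) x) (insert (N + 1) y) = (B + C) / B * w1 x y := by
      intro x y hx hy
      simp [w, Finset.erase_insert hx, Finset.erase_insert hy]
    have wUD : ∀ x y, N + 1 ∉ x → N + 1 ∉ y →
        w (insert (N + 1) x) y = if x = y then B - A * C / B else 0 := by
      intro x y hx hy
      simp [w, Finset.erase_insert hx, hy]
    have wDU : ∀ x y, N + 1 ∉ x → w x (insert (N + 1) y) = 0 := by
      intro x y hx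
      simp [w, hx]
    have wDD : ∀ x y, N + 1 ∉ x → N + 1 ∉ y → w x y = (A + B) / B * w2 x y := by
      intro x y hx hy
      simp [w, hx, hy]
    have hkk : N + 1 ≤ 2 * (k + 1 + 1) := by omega
    refine ⟨w, ?_, ?_, ?_, ?_⟩
    · intro x y
      have := hw1 (x.erase (N + 1)) (y.erase (N + 1))
      have := hw2 x y
      simp only [w]
      split_ifs <;> positivity
    · intro x hx y hy hne
      rw [BL_succ hkk, Finset.mem_union, Finset.mem_image] at hx
      rw [BL_succ hk, Finset.mem_union, Finset.mem_image] at hy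
      rcases hx with hx | ⟨x, hx, rfl⟩ <;> rcases hy with hy | ⟨y, hy, rfl⟩
      · rw [wDD x y (BL_not_mem hx) (BL_not_mem hy)] at hne
        exact hs2 x hx y hy (right_ne_zero_of_mul hne)
      · exact absurd (wDU x y (BL_not_mem hx)) hne
      · rw [wUD x y (BL_not_mem hx) (BL_not_mem hy)] at hne
        have : x = y := by
          by_contra h
          simp [h] at hne
        subst this
        exact Finset.subset_insert _ _
      · rw [wUU x y (BL_not_mem hx) (BL_not_mem hy)] at hne
        exact Finset.insert_subset_insert _ (hs1 x hx y hy (right_ne_zero_of_mul hne))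
    · intro x hx
      rw [sum_BL_succ hk]
      rw [BL_succ hkk, Finset.mem_union, Finset.mem_image] at hx
      rcases hx with hx | ⟨x, hx, rfl⟩
      · rw [Finset.sum_congr rfl fun y hy => wDD x y (BL_not_mem hx) (BL_not_mem hy),
          Finset.sum_congr rfl fun y hy => wDU x y (BL_not_mem hx), ← Finset.mul_sum, hx2 x hx]
        simp only [Finset.sum_const_zero]
        field_simp
        ring
      · rw [Finset.sum_congr rfl fun y hy => wUD x y (BL_not_mem hx) (BL_not_mem hy),
          Finset.sum_congr rfl fun y hy => wUU x y (BL_not_mem hx) (BL_not_mem hy),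
          ← Finset.mul_sum, hx1 x hx, Finset.sum_ite_eq, if_pos hx]
        field_simp
        ring
    · intro y hy
      rw [sum_BL_succ hkk]
      rw [BL_succ hk, Finset.mem_union, Finset.mem_image] at hy
      rcases hy with hy | ⟨y, hy, rfl⟩
      · rw [Finset.sum_congr rfl fun x hx => wDD x y (BL_not_mem hx) (BL_not_mem hy),
          Finset.sum_congr rfl fun x hx => wUD x y (BL_not_mem hx) (BL_not_mem hy),
          ← Finset.mul_sum, hy2 y hy, Finset.sum_ite_eq', if_pos hy]
        field_simp
        ring
      · rw [Finset.sum_congr rfl fun x hx => wDU x y (BL_not_mem hx),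
          Finset.sum_congr rfl fun x hx => wUU x y (BL_not_mem hx) (BL_not_mem hy),
          ← Finset.mul_sum, hy1 y hy]
        simp only [Finset.sum_const_zero]
        field_simp
        ring

/-- Two-point log-Sobolev inequality. -/
lemma two_point (a b S T : ℝ) (ha : 0 < a) (hb : 0 < b) (hS : 0 ≤ S) (hT : 0 ≤ T) :
    S * Real.log (S / a) + T * Real.log (T / b) - (S + T) * Real.log ((S + T) / (a + b))
      ≤ (a + b) * (√(S / a) - √(T / b)) ^ 2 := by
  set s := √(S / a) with hs
  set t := √(T / b) with ht
  have hs2 : s ^ 2 = S / a := Real.sq_sqrt (by positivity)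
  have ht2 : t ^ 2 = T / b := Real.sq_sqrt (by positivity)
  have hs0 : 0 ≤ s := Real.sqrt_nonneg _
  have ht0 : 0 ≤ t := Real.sqrt_nonneg _
  have hSe : S = a * s ^ 2 := by rw [hs2]; field_simp
  have hTe : T = b * t ^ 2 := by rw [ht2]; field_simp
  clear_value s t
  rcases (add_nonneg hS hT).eq_or_lt with h | h
  · have h1 : S = 0 := by linarith
    have h2 : T = 0 := by linarith
    rw [h1, h2]
    simp
    positivity
  have key : ∀ (c U : ℝ), 0 < c → 0 ≤ U →
      U * Real.log (U / c) - U * Real.log ((S + T) / (a + b))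
        ≤ U * (U / c / ((S + T) / (a + b)) - 1) := by
    intro c U hc hU
    rcases hU.eq_or_lt with h' | h'
    · rw [← h']; simp
    rw [← mul_sub, ← Real.log_div (by positivity) (by positivity)]
    exact mul_le_mul_of_nonneg_left (Real.log_le_sub_one_of_pos (by positivity)) hU
  have k1 := key a S ha hS
  have k2 := key b T hb hT
  have : S * (S / a / ((S + T) / (a + b)) - 1) + T * (T / b / ((S + T) / (a + b)) - 1)
      ≤ (a + b) * (s - t) ^ 2 := by
    have e : S * (S / a / ((S + T) / (a + b)) - 1) + T * (T / b / ((S + T) / (a + b)) - 1)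
      = a * b * (s - t) ^ 2 * (s + t) ^ 2 / (S + T) := by
      field_simp
      rw [hSe, hTe]
      ring
    rw [e, div_le_iff₀ h]
    have : a * b * (s + t) ^ 2 ≤ (a + b) * (S + T) := by
      rw [hSe, hTe]
      nlinarith [sq_nonneg (a * s - b * t)]
    nlinarith [mul_le_mul_of_nonneg_right this (sq_nonneg (s - t))]
  linarith

/-- Unnormalised Dirichlet form. -/
noncomputable def DirBL (N k : ℕ) (g : Finset ℕ → ℝ) : ℝ :=
  ∑ x ∈ BL N k, ∑ y ∈ BL N k,
    if (x \ y).card = 1 ∧ (y \ x).card = 1 then (g x - g y) ^ 2 else 0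

/-- Unnormalised entropy. -/
noncomputable def EntBL (N k : ℕ) (g : Finset ℕ → ℝ) : ℝ :=
  ∑ x ∈ BL N k, g x ^ 2 * Real.log (g x ^ 2)
    - (∑ x ∈ BL N k, g x ^ 2) * Real.log ((∑ x ∈ BL N k, g x ^ 2) / (BL N k).card)

set_option maxHeartbeats 2000000 in
/-- Cross terms dominate. -/
lemma cross_BL (N k : ℕ) (g h : Finset ℕ → ℝ) (hA : 0 < (BL N k).card)
    (hB : 0 < (BL N (k + 1)).card) :
    (((BL N (k + 1)).card : ℝ) + (BL N k).card) *
      (√((∑ x ∈ BL N (k + 1), g x ^ 2) / (BL N (k + 1)).card)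
        - √((∑ x ∈ BL N k, h x ^ 2) / (BL N k).card)) ^ 2
    ≤ 2 * ∑ x ∈ BL N (k + 1), ∑ y ∈ BL N k, if y ⊆ x then (g x - h y) ^ 2 else 0 := by
  obtain ⟨w, hw, hs, hx, hy⟩ := BL_coupling N k
  set S := ∑ x ∈ BL N (k + 1), g x ^ 2 with hS
  set T := ∑ x ∈ BL N k, h x ^ 2 with hT
  have hA' : (0 : ℝ) < (BL N k).card := by exact_mod_cast hA
  have hB' : (0 : ℝ) < (BL N (k + 1)).card := by exact_mod_cast hB
  have hS0 : 0 ≤ S := Finset.sum_nonneg fun _ _ => sq_nonneg _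
  have hT0 : 0 ≤ T := Finset.sum_nonneg fun _ _ => sq_nonneg _
  set X := ∑ x ∈ BL N (k + 1), ∑ y ∈ BL N k, if y ⊆ x then (g x - h y) ^ 2 else 0 with hX
  set W := ∑ x ∈ BL N (k + 1), ∑ y ∈ BL N k, w x y * (g x - h y) ^ 2 with hW
  have wA : ∀ x ∈ BL N (k + 1), ∀ y ∈ BL N k, w x y ≤ (BL N k).card := fun x hx' y hy' => by
    rw [← hx x hx']
    exact Finset.single_le_sum (f := fun y => w x y) (fun y _ => hw x y) hy'
  have wB : ∀ x ∈ BL N (k + 1), ∀ y ∈ BL N k, w x y ≤ (BL N (k + 1)).card :=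
    fun x hx' y hy' => by
    rw [← hy y hy']
    exact Finset.single_le_sum (f := fun x => w x y) (fun x _ => hw x y) hx'
  have bound : ∀ c : ℝ, 0 ≤ c → (∀ x ∈ BL N (k + 1), ∀ y ∈ BL N k, w x y ≤ c) → W ≤ c * X := by
    intro c hc hb
    rw [hW, hX, Finset.mul_sum]
    refine Finset.sum_le_sum fun x hx' => ?_
    rw [Finset.mul_sum]
    refine Finset.sum_le_sum fun y hy' => ?_
    split_ifs with hsub
    · exact mul_le_mul_of_nonneg_right (hb x hx' y hy') (sq_nonneg _)
    · have : w x y = 0 := by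
        by_contra hne
        exact hsub (hs x hx' y hy' hne)
      rw [this]; simp
  have b1 := bound _ hA'.le wA
  have b2 := bound _ hB'.le wB
  have e1 : ∑ x ∈ BL N (k + 1), ∑ y ∈ BL N k, w x y * g x ^ 2 = (BL N k).card * S := by
    rw [hS, Finset.mul_sum]
    refine Finset.sum_congr rfl fun x hx' => ?_
    rw [← Finset.sum_mul, hx x hx']
  have e2 : ∑ x ∈ BL N (k + 1), ∑ y ∈ BL N k, w x y * h y ^ 2 = (BL N (k + 1)).card * T := by
    rw [hT, Finset.mul_sum, Finset.sum_comm]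
    refine Finset.sum_congr rfl fun y hy' => ?_
    rw [← Finset.sum_mul, hy y hy']
  generalize ((BL N k).card : ℝ) = A at *
  generalize ((BL N (k + 1)).card : ℝ) = B at *
  set s := √(S / B) with hs'
  set t := √(T / A) with ht'
  have hs2 : s ^ 2 = S / B := Real.sq_sqrt (by positivity)
  have ht2 : t ^ 2 = T / A := Real.sq_sqrt (by positivity)
  have hs0 : 0 ≤ s := Real.sqrt_nonneg _
  have ht0 : 0 ≤ t := Real.sqrt_nonneg _
  have hSe : S = B * s ^ 2 := by rw [hs2]; field_simp
  have hTe : T = A * t ^ 2 := by rw [ht2]; field_simp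
  clear_value s t S T
  -- Cauchy-Schwarz
  have e3 : ∑ x ∈ BL N (k + 1), ∑ y ∈ BL N k, w x y * (g x * h y) ≤ A * B * s * t := by
    set V := ∑ x ∈ BL N (k + 1), ∑ y ∈ BL N k, w x y * (g x * h y) with hV
    have hq : V ^ 2 ≤ (A * S) * (B * T) := by
      rw [← e1, ← e2, hV]
      simp only [← Finset.sum_product']
      apply Finset.sum_sq_le_sum_mul_sum_of_sq_le_mul
      · intro p _
        exact mul_nonneg (hw _ _) (sq_nonneg _)
      · intro p _
        exact mul_nonneg (hw _ _) (sq_nonneg _)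
      · intro p _
        exact le_of_eq (by ring)
    have hr : V ^ 2 ≤ (A * B * s * t) ^ 2 := by
      refine hq.trans (le_of_eq ?_)
      rw [hSe, hTe]
      ring
    clear_value V
    have hr0 : 0 ≤ A * B * s * t :=
      mul_nonneg (mul_nonneg (mul_nonneg hA'.le hB'.le) hs0) ht0
    exact (abs_le_of_sq_le_sq' hr hr0).2
  have e4 : W = A * S - 2 * (∑ x ∈ BL N (k + 1), ∑ y ∈ BL N k, w x y * (g x * h y)) + B * T := by
    rw [← e1, ← e2, hW]
    simp only [Finset.mul_sum, ← Finset.sum_sub_distrib, ← Finset.sum_add_distrib]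
    refine Finset.sum_congr rfl fun x _ => Finset.sum_congr rfl fun y _ => ?_
    ring
  have e5 : A * B * (s - t) ^ 2 ≤ W := by
    have e6 : A * B * (s - t) ^ 2 = A * S - 2 * (A * B * s * t) + B * T := by
      rw [hSe, hTe]
      ring
    rw [e4, e6]
    linarith
  have f1 : B * (s - t) ^ 2 ≤ X := by
    have : A * (B * (s - t) ^ 2) ≤ A * X := by linarith
    exact le_of_mul_le_mul_left this hA'
  have f2 : A * (s - t) ^ 2 ≤ X := by
    have : B * (A * (s - t) ^ 2) ≤ B * X := by linarith
    exact le_of_mul_le_mul_left this hB'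
  linarith

lemma EntBL_eq_zero_aux (N k : ℕ) (g : Finset ℕ → ℝ) : 0 ≤ DirBL N k g := by
  refine Finset.sum_nonneg fun x _ => Finset.sum_nonneg fun y _ => ?_
  split_ifs <;> positivity

lemma DirBL_succ {N k : ℕ} (hk : N + 1 ≤ 2 * (k + 1)) (g : Finset ℕ → ℝ) :
    DirBL N (k + 1) g + DirBL N k (fun x => g (insert (N + 1) x)) +
      2 * (∑ x ∈ BL N (k + 1), ∑ y ∈ BL N k,
        if y ⊆ x then (g x - g (insert (N + 1) y)) ^ 2 else 0) ≤ DirBL (N + 1) (k + 1) g := by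
  have cr : ∀ x ∈ BL N (k + 1), ∀ y ∈ BL N k, y ⊆ x →
      (x \ insert (N + 1) y).card = 1 ∧ (insert (N + 1) y \ x).card = 1 := by
    intro x hx y hy hxy
    have nx := BL_not_mem hx
    have ny := BL_not_mem hy
    have cx := (mem_BL.1 hx).2.1
    have cy := (mem_BL.1 hy).2.1
    constructor
    · rw [Finset.sdiff_insert, Finset.erase_eq_of_notMem (by simp [nx]),
        Finset.card_sdiff_of_subset hxy]
      omega
    · rw [Finset.insert_sdiff_of_notMem _ nx, Finset.sdiff_eq_empty_iff_subset.2 hxy]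
      simp
  have c1 : ∑ x ∈ BL N (k + 1), ∑ y ∈ BL N k,
        (if y ⊆ x then (g x - g (insert (N + 1) y)) ^ 2 else 0)
      ≤ ∑ x ∈ BL N (k + 1), ∑ y ∈ BL N k,
        if (x \ insert (N + 1) y).card = 1 ∧ (insert (N + 1) y \ x).card = 1
          then (g x - g (insert (N + 1) y)) ^ 2 else 0 := by
    refine Finset.sum_le_sum fun x hx => Finset.sum_le_sum fun y hy => ?_
    by_cases h : y ⊆ x
    · rw [if_pos h, if_pos (cr x hx y hy h)]
    · rw [if_neg h]
      split_ifs <;> positivity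
  have c2 : ∑ x ∈ BL N (k + 1), ∑ y ∈ BL N k,
        (if y ⊆ x then (g x - g (insert (N + 1) y)) ^ 2 else 0)
      ≤ ∑ y ∈ BL N k, ∑ x ∈ BL N (k + 1),
        if (insert (N + 1) y \ x).card = 1 ∧ (x \ insert (N + 1) y).card = 1
          then (g (insert (N + 1) y) - g x) ^ 2 else 0 := by
    rw [Finset.sum_comm]
    refine Finset.sum_le_sum fun y hy => Finset.sum_le_sum fun x hx => ?_
    by_cases h : y ⊆ x
    · rw [if_pos h, if_pos (cr x hx y hy h).symm]
      exact le_of_eq (by ring)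
    · rw [if_neg h]
      split_ifs <;> positivity
  have c3 : DirBL N k (fun x => g (insert (N + 1) x)) = ∑ x ∈ BL N k, ∑ y ∈ BL N k,
      if (insert (N + 1) x \ insert (N + 1) y).card = 1 ∧
        (insert (N + 1) y \ insert (N + 1) x).card = 1
          then (g (insert (N + 1) x) - g (insert (N + 1) y)) ^ 2 else 0 := by
    refine Finset.sum_congr rfl fun x hx => Finset.sum_congr rfl fun y hy => ?_
    have nx := BL_not_mem hx
    have ny := BL_not_mem hy
    have r : ∀ x y : Finset ℕ, N + 1 ∉ x → insert (N + 1) x \ insert (N + 1) y = x \ y := by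
      intro x y nx
      ext a
      simp only [Finset.mem_sdiff, Finset.mem_insert]
      by_cases h : a = N + 1
      · subst h; simp [nx]
      · simp [h]
    rw [r x y nx, r y x ny]
  rw [c3]
  unfold DirBL
  rw [sum_BL_succ hk]
  simp only [sum_BL_succ hk, Finset.sum_add_distrib]
  linarith

lemma logSob_BL (N : ℕ) : ∀ (k : ℕ) (g : Finset ℕ → ℝ), EntBL N k g ≤ DirBL N k g := by
  induction N with
  | zero =>
    intro k g
    cases k with
    | zero => simp [EntBL, DirBL, BL_zero_zero]
    | succ k => simp [EntBL, DirBL, BL_zero_succ]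
  | succ N ih =>
    intro k g
    by_cases h : 2 * k < N + 1
    · simp [EntBL, DirBL, BL_empty h]
    obtain ⟨k, rfl⟩ : ∃ i', k = i' + 1 := ⟨k - 1, by omega⟩
    have hk : N + 1 ≤ 2 * (k + 1) := by omega
    refine le_trans ?_ (DirBL_succ hk g)
    have i1 := ih (k + 1) g
    have i2 := ih k (fun x => g (insert (N + 1) x))
    set X := ∑ x ∈ BL N (k + 1), ∑ y ∈ BL N k,
        (if y ⊆ x then (g x - g (insert (N + 1) y)) ^ 2 else 0) with hX
    have hX0 : 0 ≤ X := by
      refine Finset.sum_nonneg fun x _ => Finset.sum_nonneg fun y _ => ?_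
      split_ifs <;> positivity
    suffices hs : EntBL (N + 1) (k + 1) g - EntBL N (k + 1) g
        - EntBL N k (fun x => g (insert (N + 1) x)) ≤ 2 * X by linarith
    unfold EntBL
    rw [sum_BL_succ hk, sum_BL_succ hk, card_BL_succ hk]
    push_cast
    rcases Finset.eq_empty_or_nonempty (BL N k) with hA | hA
    · rw [hA]
      simp only [Finset.sum_empty, Finset.card_empty]
      simp
      linarith
    rcases Finset.eq_empty_or_nonempty (BL N (k + 1)) with hB | hB
    · rw [hB]
      simp only [Finset.sum_empty, Finset.card_empty]
      simp
      linarith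
    have cb := cross_BL N k g (fun x => g (insert (N + 1) x)) (Finset.card_pos.2 hA)
      (Finset.card_pos.2 hB)
    have tp := two_point (BL N (k + 1)).card (BL N k).card (∑ x ∈ BL N (k + 1), g x ^ 2)
      (∑ x ∈ BL N k, g (insert (N + 1) x) ^ 2) (by exact_mod_cast Finset.card_pos.2 hB)
      (by exact_mod_cast Finset.card_pos.2 hA) (Finset.sum_nonneg fun _ _ => sq_nonneg _)
      (Finset.sum_nonneg fun _ _ => sq_nonneg _)
    linarith

/-- Log-Sobolev inequality for the Dyck random transposition chain: the
log-Sobolev constant is at least `1/(4n²)`. -/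
theorem dyck_logSobolev (n : ℕ) (hn : 1 ≤ n) (f : Finset ℕ → ℝ)
    (hf : ∃ x ∈ dyck n, f x ≠ 0) :
    dyckDirichlet n f ≥ (1 / (4 * (n : ℝ) ^ 2)) * dyckEnt n f := by
  have hd : dyck n = BL (2 * n) n := rfl
  have hpi : 0 ≤ dyckPi n := by unfold dyckPi; positivity
  have hn0 : (0 : ℝ) < n := by exact_mod_cast hn
  have hE : dyckEnt n f = EntBL (2 * n) n f * dyckPi n := by
    unfold dyckEnt EntBL
    rw [← Finset.sum_mul, ← hd, ← Finset.sum_mul]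
    congr 1
    simp only [mul_sub, Finset.sum_sub_distrib]
    rw [← Finset.sum_mul]
    rfl
  have hD : dyckDirichlet n f = 1 / (4 * (n : ℝ) ^ 2) * (DirBL (2 * n) n f * dyckPi n) := by
    unfold dyckDirichlet DirBL
    rw [← hd]
    simp only [Finset.sum_mul, Finset.mul_sum]
    refine Finset.sum_congr rfl fun x _ => Finset.sum_congr rfl fun y _ => ?_
    unfold dyckP
    by_cases hxy : x = y
    · subst hxy; simp
    · rw [if_neg hxy]
      unfold dyckStep
      split_ifs
      · field_simp
        ring
      · simp
  rw [hE, hD, ge_iff_le]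
  have := logSob_BL (2 * n) n f
  gcongr
end

section
/- Upper bound on the spectral gap of the Dyck random transposition chain: for every n ≥ 2, the function f : 𝓓(n) → ℝ with f(S) = the number of even indices in {1,…,2n} \ S is non-constant and satisfies 𝓔(f,f) ≤ (4/n) · Var_π(f); consequently the spectral gap λ = inf over non-constant g of 𝓔(g,g)/Var_π(g) satisfies λ ≤ 4/n. -/
open scoped Classical

/-- The number of down-steps at even indices of the Dyck path with up-step set `S`. -/
noncomputable def evenDownSteps (n : ℕ) (S : Finset ℕ) : ℝ :=
  (((Finset.Icc 1 (2 * n)) \ S).filter (fun i => Even i)).card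

/-- Ballot-type prefixes of length `m` with `c` up-steps. -/
noncomputable def ballotD (m c : ℕ) : Finset (Finset ℕ) :=
  (Finset.Icc 1 m).powerset.filter fun S =>
    S.card = c ∧ ∀ k ∈ Finset.Icc 1 m, k ≤ 2 * (S ∩ Finset.Icc 1 k).card

lemma mem_ballotD {m c : ℕ} {S : Finset ℕ} : S ∈ ballotD m c ↔
    S ⊆ Finset.Icc 1 m ∧ S.card = c ∧
      ∀ k, 1 ≤ k → k ≤ m → k ≤ 2 * (S ∩ Finset.Icc 1 k).card := by
  simp [ballotD]

lemma mem_dyck {n : ℕ} {S : Finset ℕ} : S ∈ dyck n ↔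
    S ⊆ Finset.Icc 1 (2 * n) ∧ S.card = n ∧
      ∀ k, 1 ≤ k → k ≤ 2 * n → k ≤ 2 * (S ∩ Finset.Icc 1 k).card := by
  simp [dyck]

lemma ballotD_succ (m c : ℕ) (h : m + 1 ≤ 2 * (c + 1)) :
    ballotD (m + 1) (c + 1) = ballotD m (c + 1) ∪ (ballotD m c).image (insert (m + 1)) := by
  ext S
  rw [Finset.mem_union, Finset.mem_image, mem_ballotD, mem_ballotD]
  constructor
  · rintro ⟨h1, h2, h3⟩
    by_cases hS : m + 1 ∈ S
    · right
      refine ⟨S.erase (m + 1), ?_, Finset.insert_erase hS⟩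
      rw [mem_ballotD]
      refine ⟨?_, ?_, ?_⟩
      · intro j hj
        rw [Finset.mem_erase] at hj
        have := h1 hj.2
        rw [Finset.mem_Icc] at this ⊢
        omega
      · rw [Finset.card_erase_of_mem hS]; omega
      · intro k hk1 hk2
        have := h3 k hk1 (by omega)
        have e : S.erase (m + 1) ∩ Finset.Icc 1 k = S ∩ Finset.Icc 1 k := by
          ext j
          simp only [Finset.mem_inter, Finset.mem_erase, Finset.mem_Icc]
          constructor
          · tauto
          · rintro ⟨a, b⟩; exact ⟨⟨by omega, a⟩, b⟩
        rwa [e]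
    · left
      refine ⟨?_, h2, fun k a b => h3 k a (by omega)⟩
      intro j hj
      have := h1 hj
      have hne : j ≠ m + 1 := fun e => hS (e ▸ hj)
      rw [Finset.mem_Icc] at this ⊢
      omega
  · rintro (⟨h1, h2, h3⟩ | ⟨T, hT, rfl⟩)
    · refine ⟨h1.trans (Finset.Icc_subset_Icc_right (by omega)), h2, ?_⟩
      intro k a b
      rcases Nat.lt_or_ge m k with hk | hk
      · have e : S ∩ Finset.Icc 1 k = S :=
          Finset.inter_eq_left.2 (h1.trans (Finset.Icc_subset_Icc_right (by omega)))
        rw [e, h2]; omega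
      · exact h3 k a hk
    · rw [mem_ballotD] at hT
      obtain ⟨h1, h2, h3⟩ := hT
      have hn : m + 1 ∉ T := fun hh => by
        have := h1 hh
        rw [Finset.mem_Icc] at this; omega
      have hsub : insert (m + 1) T ⊆ Finset.Icc 1 (m + 1) := by
        intro j hj
        rw [Finset.mem_insert] at hj
        rw [Finset.mem_Icc]
        rcases hj with rfl | hj
        · omega
        · have := h1 hj
          rw [Finset.mem_Icc] at this; omega
      have hc : (insert (m + 1) T).card = c + 1 := by
        rw [Finset.card_insert_of_notMem hn, h2]
      refine ⟨hsub, hc, ?_⟩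
      intro k a b
      rcases Nat.lt_or_ge m k with hk | hk
      · have e : insert (m + 1) T ∩ Finset.Icc 1 k = insert (m + 1) T :=
          Finset.inter_eq_left.2 (hsub.trans (Finset.Icc_subset_Icc_right (by omega)))
        rw [e, hc]; omega
      · exact (h3 k a hk).trans (Nat.mul_le_mul_left 2 (Finset.card_le_card
          (Finset.inter_subset_inter_right (Finset.subset_insert _ _))))

lemma card_ballotD (m : ℕ) : ∀ c, m ≤ 2 * c + 1 →
    (ballotD m c).card + m.choose (c + 1) = m.choose c := by
  induction m with
  | zero =>
    intro c _
    rcases c with _ | c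
    · have : ballotD 0 0 = {∅} := by
        ext S
        rw [mem_ballotD, Finset.mem_singleton]
        constructor
        · rintro ⟨_, h, _⟩; exact Finset.card_eq_zero.1 h
        · rintro rfl
          refine ⟨by simp, by simp, ?_⟩
          intro k a b; omega
      simp [this]
    · have : ballotD 0 (c + 1) = ∅ := by
        ext S
        rw [mem_ballotD]
        constructor
        · rintro ⟨h, h', _⟩
          have := Finset.card_le_card h
          simp at this
          simp [this] at h'
        · simp
      simp [this]
  | succ m ih =>
    intro c hc
    by_cases hm : m + 1 = 2 * c + 1
    · have : ballotD (m + 1) c = ∅ := by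
        rw [Finset.eq_empty_iff_forall_notMem]
        intro S hS
        rw [mem_ballotD] at hS
        have h1 := hS.2.2 (m + 1) (by omega) le_rfl
        have h2 : (S ∩ Finset.Icc 1 (m + 1)).card ≤ S.card :=
          Finset.card_le_card Finset.inter_subset_left
        omega
      rw [this, Finset.card_empty, zero_add, hm]
      exact Nat.choose_symm_half c
    · obtain ⟨c, rfl⟩ : ∃ d, c = d + 1 := ⟨c - 1, by omega⟩
      rw [ballotD_succ m c (by omega), Finset.card_union_of_disjoint, Finset.card_image_of_injOn]
      · have h1 := ih c (by omega)
        have h2 := ih (c + 1) (by omega)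
        rw [Nat.choose_succ_succ m (c + 1), Nat.choose_succ_succ m c]
        simp only [Nat.succ_eq_add_one] at *
        omega
      · intro A hA B hB hAB
        have key : ∀ T ∈ ballotD m c, m + 1 ∉ T := fun T hT hh => by
          have := (mem_ballotD.1 hT).1 hh
          rw [Finset.mem_Icc] at this; omega
        have := congrArg (fun T => Finset.erase T (m + 1)) hAB
        simpa [Finset.erase_insert (key A hA), Finset.erase_insert (key B hB)] using this
      · rw [Finset.disjoint_left]
        intro S hS hS'
        obtain ⟨T, hT, rfl⟩ := Finset.mem_image.1 hS'
        have := (mem_ballotD.1 hS).1 (Finset.mem_insert_self _ _)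
        rw [Finset.mem_Icc] at this; omega

lemma card_dyck (n : ℕ) : (n + 1) * (dyck n).card = n.centralBinom := by
  have h : (dyck n).card + (2 * n).choose (n + 1) = (2 * n).choose n :=
    card_ballotD (2 * n) n (by omega)
  have h2 := Nat.choose_succ_right_eq (2 * n) n
  rw [show 2 * n - n = n by omega] at h2
  rw [Nat.centralBinom]
  nlinarith

lemma card_dyck_pos (n : ℕ) : 0 < (dyck n).card := by
  have := card_dyck n
  have h2 := Nat.centralBinom_pos n
  by_contra h
  have : (dyck n).card = 0 := by omega
  simp_all

lemma card_dyck_succ_le (n : ℕ) : (dyck (n + 1)).card ≤ 4 * (dyck n).card := by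
  have h1 := card_dyck n
  have h2 := card_dyck (n + 1)
  have h3 := Nat.succ_mul_centralBinom_succ n
  rw [← h1, ← h2] at h3
  have h4 : (n + 2) * (dyck (n + 1)).card = 2 * (2 * n + 1) * (dyck n).card := by
    have : (n + 1) * ((n + 2) * (dyck (n + 1)).card)
      = (n + 1) * (2 * (2 * n + 1) * (dyck n).card) := by
      linarith
    exact Nat.eq_of_mul_eq_mul_left (by omega) this
  nlinarith

/-- The swap of the steps `2i+2` and `2i+3`. -/
noncomputable def flipD (i : ℕ) (x : Finset ℕ) : Finset ℕ :=
  x.image (Equiv.swap (2 * i + 2) (2 * i + 3))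

lemma mem_flipD {i j : ℕ} {x : Finset ℕ} :
    j ∈ flipD i x ↔ Equiv.swap (2 * i + 2) (2 * i + 3) j ∈ x := by
  rw [flipD, Finset.mem_image]
  constructor
  · rintro ⟨a, ha, rfl⟩; simpa using ha
  · intro h; exact ⟨_, h, by simp⟩

lemma flipD_flipD (i : ℕ) (x : Finset ℕ) : flipD i (flipD i x) = x := by
  ext j; simp [mem_flipD]

lemma swap_mem_Icc {i j k : ℕ} (hk : k ≠ 2 * i + 2) :
    Equiv.swap (2 * i + 2) (2 * i + 3) j ∈ Finset.Icc 1 k ↔ j ∈ Finset.Icc 1 k := by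
  rw [Equiv.swap_apply_def]
  simp only [Finset.mem_Icc]
  split_ifs <;> omega

lemma flipD_inter_card {i k : ℕ} (x : Finset ℕ) (hk : k ≠ 2 * i + 2) :
    (flipD i x ∩ Finset.Icc 1 k).card = (x ∩ Finset.Icc 1 k).card := by
  have : flipD i x ∩ Finset.Icc 1 k = flipD i (x ∩ Finset.Icc 1 k) := by
    ext j
    rw [Finset.mem_inter, mem_flipD, mem_flipD, Finset.mem_inter, swap_mem_Icc hk]
  rw [this, flipD, Finset.card_image_of_injective _ (Equiv.injective _)]

lemma flipD_mem {n i : ℕ} (hi : i + 1 < n) {x : Finset ℕ} (hx : x ∈ dyck n) :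
    flipD i x ∈ dyck n := by
  rw [mem_dyck] at hx ⊢
  obtain ⟨h1, h2, h3⟩ := hx
  refine ⟨?_, ?_, ?_⟩
  · intro j hj
    have := h1 (mem_flipD.1 hj)
    rwa [swap_mem_Icc (by omega)] at this
  · rw [flipD, Finset.card_image_of_injective _ (Equiv.injective _), h2]
  · intro k a b
    by_cases hk : k = 2 * i + 2
    · have h4 := h3 (2 * i + 1) (by omega) (by omega)
      rw [← flipD_inter_card (i := i) x (by omega)] at h4
      have h5 : (flipD i x ∩ Finset.Icc 1 (2 * i + 1)).card ≤ (flipD i x ∩ Finset.Icc 1 k).card :=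
        Finset.card_le_card (Finset.inter_subset_inter_left
          (Finset.Icc_subset_Icc_right (by omega)))
      omega
    · rw [flipD_inter_card x hk]; exact h3 k a b

/-- Indicator of a down-step. -/
noncomputable def downI (x : Finset ℕ) (j : ℕ) : ℝ := if j ∈ x then 0 else 1

/-- Sign of the block `(2i+2, 2i+3)`. -/
noncomputable def sgnD (i : ℕ) (x : Finset ℕ) : ℝ := downI x (2 * i + 2) - downI x (2 * i + 3)

lemma sgnD_flip_self (i : ℕ) (x : Finset ℕ) : sgnD i (flipD i x) = - sgnD i x := by
  simp [sgnD, downI, mem_flipD]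

lemma sgnD_flip_ne {i j : ℕ} (h : i ≠ j) (x : Finset ℕ) : sgnD j (flipD i x) = sgnD j x := by
  have h1 : Equiv.swap (2 * i + 2) (2 * i + 3) (2 * j + 2) = 2 * j + 2 :=
    Equiv.swap_apply_of_ne_of_ne (by omega) (by omega)
  have h2 : Equiv.swap (2 * i + 2) (2 * i + 3) (2 * j + 3) = 2 * j + 3 :=
    Equiv.swap_apply_of_ne_of_ne (by omega) (by omega)
  simp only [sgnD, downI, mem_flipD, h1, h2]

lemma sum_flip {n i : ℕ} (hi : i + 1 < n) (g : Finset ℕ → ℝ) :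
    ∑ x ∈ dyck n, g (flipD i x) = ∑ x ∈ dyck n, g x :=
  Finset.sum_bij' (fun x _ => flipD i x) (fun x _ => flipD i x)
    (fun _ h => flipD_mem hi h) (fun _ h => flipD_mem hi h)
    (fun _ _ => flipD_flipD _ _) (fun _ _ => flipD_flipD _ _) (fun _ _ => rfl)

lemma sum_sgnD {n i : ℕ} (hi : i + 1 < n) : ∑ x ∈ dyck n, sgnD i x = 0 := by
  have := sum_flip hi (sgnD i)
  simp only [sgnD_flip_self, Finset.sum_neg_distrib] at this
  linarith

lemma sum_sgnD_mul {n i j : ℕ} (hi : i + 1 < n) (h : i ≠ j) :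
    ∑ x ∈ dyck n, sgnD i x * sgnD j x = 0 := by
  have := sum_flip hi (fun x => sgnD i x * sgnD j x)
  simp only [sgnD_flip_self, sgnD_flip_ne h, neg_mul, Finset.sum_neg_distrib] at this
  linarith

lemma sum_pairs (u : ℕ → ℝ) (n : ℕ) :
    ∑ j ∈ Finset.Icc 1 (2 * n), u j
      = ∑ i ∈ Finset.range n, u (2 * i + 1) + ∑ i ∈ Finset.range n, u (2 * i + 2) := by
  induction n with
  | zero => simp
  | succ n ih =>
    rw [show 2 * (n + 1) = 2 * n + 1 + 1 by ring, Finset.sum_Icc_succ_top (by omega),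
      Finset.sum_Icc_succ_top (by omega), ih, Finset.sum_range_succ, Finset.sum_range_succ]
    ring

lemma evenDownSteps_eq_sum (n : ℕ) (x : Finset ℕ) :
    evenDownSteps n x = ∑ i ∈ Finset.range n, downI x (2 * i + 2) := by
  have h : evenDownSteps n x
      = ∑ j ∈ Finset.Icc 1 (2 * n), (if Even j then downI x j else 0) := by
    rw [evenDownSteps, Finset.card_eq_sum_ones, Finset.sum_filter, Finset.sdiff_eq_filter,
      Finset.sum_filter]
    push_cast
    refine Finset.sum_congr rfl fun j _ => ?_
    unfold downI
    split_ifs <;> simp_all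
  rw [h, sum_pairs]
  have a : ∀ i : ℕ, ¬ Even (2 * i + 1) := fun i => by
    rw [Nat.not_even_iff_odd]; exact ⟨i, rfl⟩
  have b : ∀ i : ℕ, Even (2 * i + 2) := fun i => ⟨i + 1, by ring⟩
  simp [a, b]

lemma evenDownSteps_eq {m : ℕ} {x : Finset ℕ} (hx : x ∈ dyck (m + 1)) :
    evenDownSteps (m + 1) x = ((m : ℝ) + 2) / 2 + (∑ i ∈ Finset.range m, sgnD i x) / 2 := by
  rw [mem_dyck] at hx
  obtain ⟨h1, h2, h3⟩ := hx
  have t1 : ∑ j ∈ Finset.Icc 1 (2 * (m + 1)), downI x j = (m : ℝ) + 1 := by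
    have : ∑ j ∈ Finset.Icc 1 (2 * (m + 1)), downI x j
        = ((Finset.Icc 1 (2 * (m + 1)) \ x).card : ℝ) := by
      rw [Finset.card_eq_sum_ones, Finset.sdiff_eq_filter, Finset.sum_filter]
      push_cast
      refine Finset.sum_congr rfl fun j _ => ?_
      unfold downI
      split_ifs <;> simp_all
    rw [this, Finset.card_sdiff_of_subset h1, h2, Nat.card_Icc,
      show 2 * (m + 1) + 1 - 1 - (m + 1) = m + 1 by omega]
    push_cast; ring
  have one : (1 : ℕ) ∈ x := by
    by_contra hc
    have := h3 1 le_rfl (by omega)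
    simp [hc] at this
  have last : 2 * m + 2 ∉ x := by
    intro hc
    have h4 := h3 (2 * m + 1) (by omega) (by omega)
    have h5 : (x ∩ Finset.Icc 1 (2 * m + 1)).card < x.card := by
      apply Finset.card_lt_card
      refine ⟨Finset.inter_subset_left, fun hh => ?_⟩
      have := hh hc
      simp at this
    omega
  rw [sum_pairs] at t1
  have t2 := evenDownSteps_eq_sum (m + 1) x
  have t3 : ∑ i ∈ Finset.range (m + 1), downI x (2 * i + 1)
      = ∑ i ∈ Finset.range m, downI x (2 * i + 3) := by
    rw [Finset.sum_range_succ']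
    simp [downI, one, mul_add]
  have t4 : ∑ i ∈ Finset.range (m + 1), downI x (2 * i + 2)
      = ∑ i ∈ Finset.range m, downI x (2 * i + 2) + 1 := by
    rw [Finset.sum_range_succ]
    simp [downI, last]
  have t5 : ∑ i ∈ Finset.range m, sgnD i x = ∑ i ∈ Finset.range m, downI x (2 * i + 2)
      - ∑ i ∈ Finset.range m, downI x (2 * i + 3) := by
    simp [sgnD]
  linarith

/-- Insert an up-down pair at positions `2i+2, 2i+3`. -/
noncomputable def insD (i : ℕ) (y : Finset ℕ) : Finset ℕ :=
  insert (2 * i + 2) (y.image fun j => if j < 2 * i + 2 then j else j + 2)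

lemma shift_inj (i : ℕ) : Function.Injective fun j : ℕ => if j < 2 * i + 2 then j else j + 2 := by
  intro a b h
  simp only at h
  split_ifs at h <;> omega

lemma notMem_shift (i : ℕ) (y : Finset ℕ) :
    2 * i + 2 ∉ y.image fun j => if j < 2 * i + 2 then j else j + 2 := by
  intro h
  obtain ⟨a, _, h⟩ := Finset.mem_image.1 h
  split_ifs at h <;> omega

lemma insD_inj (i : ℕ) : Function.Injective (insD i) := by
  intro A B h
  have := congrArg (fun T => Finset.erase T (2 * i + 2)) h
  simp only [insD, Finset.erase_insert (notMem_shift i _)] at this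
  exact Finset.image_injective (shift_inj i) this

lemma insD_mem {m i : ℕ} (hi : i < m) {y : Finset ℕ} (hy : y ∈ dyck m) :
    insD i y ∈ dyck (m + 1) := by
  rw [mem_dyck] at hy ⊢
  obtain ⟨h1, h2, h3⟩ := hy
  refine ⟨?_, ?_, ?_⟩
  · intro j hj
    rw [insD, Finset.mem_insert, Finset.mem_image] at hj
    rw [Finset.mem_Icc]
    rcases hj with rfl | ⟨a, ha, rfl⟩
    · omega
    · have := h1 ha
      rw [Finset.mem_Icc] at this
      split_ifs <;> omega
  · rw [insD, Finset.card_insert_of_notMem (notMem_shift i y),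
      Finset.card_image_of_injective _ (shift_inj i), h2]
  · intro k a b
    have low : ∀ l, l ≤ 2 * i + 1 → l ≤ 2 * (y ∩ Finset.Icc 1 l).card := by
      intro l hl
      rcases Nat.eq_zero_or_pos l with rfl | hl0
      · simp
      · exact h3 l hl0 (by omega)
    have gen : ∀ l, (l ≤ k ∧ l ≤ 2 * i + 1) ∨ l + 2 ≤ k →
        (y ∩ Finset.Icc 1 l).card ≤
        ((y.image fun j => if j < 2 * i + 2 then j else j + 2) ∩ Finset.Icc 1 k).card := by
      intro l hl
      rw [← Finset.card_image_of_injective (y ∩ Finset.Icc 1 l) (shift_inj i)]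
      apply Finset.card_le_card
      intro j hj
      obtain ⟨c, hc, rfl⟩ := Finset.mem_image.1 hj
      rw [Finset.mem_inter, Finset.mem_Icc] at hc
      rw [Finset.mem_inter]
      refine ⟨Finset.mem_image_of_mem _ hc.1, ?_⟩
      rw [Finset.mem_Icc]
      split_ifs <;> omega
    rcases Nat.lt_or_ge k (2 * i + 2) with hk | hk
    · have e1 := low k (by omega)
      have e2 := gen k (by omega)
      have e3 : ((y.image fun j => if j < 2 * i + 2 then j else j + 2) ∩ Finset.Icc 1 k).card
          ≤ (insD i y ∩ Finset.Icc 1 k).card :=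
        Finset.card_le_card (Finset.inter_subset_inter_right (Finset.subset_insert _ _))
      omega
    · have e3 : ((y.image fun j => if j < 2 * i + 2 then j else j + 2) ∩ Finset.Icc 1 k).card + 1
          = (insD i y ∩ Finset.Icc 1 k).card := by
        rw [insD, Finset.insert_inter_of_mem (by rw [Finset.mem_Icc]; omega),
          Finset.card_insert_of_notMem]
        intro hh
        exact notMem_shift i y (Finset.mem_inter.1 hh).1
      have e2 := gen (k - 2) (by omega)
      have e1 : k - 2 ≤ 2 * (y ∩ Finset.Icc 1 (k - 2)).card := by
        rcases Nat.eq_zero_or_pos (k - 2) with h0 | h0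
        · omega
        · exact h3 _ h0 (by omega)
      omega

lemma sgnD_insD (i : ℕ) (y : Finset ℕ) : sgnD i (insD i y) = -1 := by
  have h1 : 2 * i + 2 ∈ insD i y := Finset.mem_insert_self _ _
  have h2 : 2 * i + 3 ∉ insD i y := by
    rw [insD, Finset.mem_insert, Finset.mem_image]
    rintro (h | ⟨a, _, h⟩)
    · omega
    · split_ifs at h <;> omega
  simp [sgnD, downI, h1, h2]

lemma sum_sgnD_sq {m i : ℕ} (hi : i < m) :
    2 * ((dyck m).card : ℝ) ≤ ∑ x ∈ dyck (m + 1), sgnD i x ^ 2 := by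
  have hd : Disjoint ((dyck m).image (insD i)) ((dyck m).image fun y => flipD i (insD i y)) := by
    rw [Finset.disjoint_left]
    intro S h1 h2
    obtain ⟨a, _, rfl⟩ := Finset.mem_image.1 h1
    obtain ⟨b, _, hb⟩ := Finset.mem_image.1 h2
    have := congrArg (sgnD i) hb
    rw [sgnD_flip_self, sgnD_insD, sgnD_insD] at this
    norm_num at this
  have hinj : Function.Injective fun y => flipD i (insD i y) := by
    intro a b h
    have := congrArg (flipD i) h
    simp only [flipD_flipD] at this
    exact insD_inj i this
  have hsub : (dyck m).image (insD i) ∪ ((dyck m).image fun y => flipD i (insD i y))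
      ⊆ dyck (m + 1) := by
    intro S hS
    rcases Finset.mem_union.1 hS with h | h
    · obtain ⟨a, ha, rfl⟩ := Finset.mem_image.1 h
      exact insD_mem hi ha
    · obtain ⟨a, ha, rfl⟩ := Finset.mem_image.1 h
      exact flipD_mem (by omega) (insD_mem hi ha)
  refine le_trans (le_of_eq ?_)
    (Finset.sum_le_sum_of_subset_of_nonneg hsub fun x _ _ => sq_nonneg _)
  rw [Finset.sum_union hd, Finset.sum_image (fun _ _ _ _ h => insD_inj i h),
    Finset.sum_image (fun _ _ _ _ h => hinj h)]
  simp [sgnD_flip_self, sgnD_insD]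
  ring

lemma var_ge (m : ℕ) : (m : ℝ) / 8 ≤ dyckVar (m + 1) (evenDownSteps (m + 1)) := by
  have hC : (0 : ℝ) < ((dyck (m + 1)).card : ℝ) := by exact_mod_cast card_dyck_pos (m + 1)
  set C : ℝ := ((dyck (m + 1)).card : ℝ) with hCdef
  set g : Finset ℕ → ℝ := fun x => ∑ i ∈ Finset.range m, sgnD i x with hg
  have G1 : ∑ x ∈ dyck (m + 1), g x = 0 := by
    rw [hg, Finset.sum_comm]
    refine Finset.sum_eq_zero fun i hi => sum_sgnD ?_
    have := Finset.mem_range.1 hi; omega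
  have G2 : ∑ x ∈ dyck (m + 1), g x ^ 2
      = ∑ i ∈ Finset.range m, ∑ x ∈ dyck (m + 1), sgnD i x ^ 2 := by
    have : ∀ x, g x ^ 2 = ∑ i ∈ Finset.range m, ∑ j ∈ Finset.range m, sgnD i x * sgnD j x := by
      intro x; rw [hg, sq, Finset.sum_mul_sum]
    simp only [this]
    rw [Finset.sum_comm]
    refine Finset.sum_congr rfl fun i hi => ?_
    rw [Finset.sum_comm, Finset.sum_eq_single i]
    · simp [sq]
    · intro j _ hj
      refine sum_sgnD_mul ?_ hj.symm
      have := Finset.mem_range.1 hi; omega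
    · intro h; exact absurd hi h
  have G3 : (m : ℝ) * (C / 2) ≤ ∑ x ∈ dyck (m + 1), g x ^ 2 := by
    rw [G2]
    have h4 : C ≤ 4 * ((dyck m).card : ℝ) := by
      rw [hCdef]; exact_mod_cast card_dyck_succ_le m
    have : ∀ i ∈ Finset.range m, C / 2 ≤ ∑ x ∈ dyck (m + 1), sgnD i x ^ 2 := by
      intro i hi
      have := sum_sgnD_sq (Finset.mem_range.1 hi)
      linarith
    have := Finset.card_nsmul_le_sum _ _ _ this
    simpa using this
  have E1 : ∑ x ∈ dyck (m + 1), evenDownSteps (m + 1) x = C * (((m : ℝ) + 2) / 2) := by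
    have G1' : ∑ x ∈ dyck (m + 1), g x / 2 = 0 := by rw [← Finset.sum_div, G1, zero_div]
    have : ∀ x ∈ dyck (m + 1), evenDownSteps (m + 1) x = ((m : ℝ) + 2) / 2 + g x / 2 :=
      fun x hx => evenDownSteps_eq hx
    rw [Finset.sum_congr rfl this, Finset.sum_add_distrib, G1', Finset.sum_const, nsmul_eq_mul,
      add_zero]
  have E2 : ∑ x ∈ dyck (m + 1), evenDownSteps (m + 1) x ^ 2
      = C * (((m : ℝ) + 2) / 2) ^ 2 + (∑ x ∈ dyck (m + 1), g x ^ 2) / 4 := by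
    have : ∀ x ∈ dyck (m + 1), evenDownSteps (m + 1) x ^ 2
        = (((m : ℝ) + 2) / 2) ^ 2 + (((m : ℝ) + 2) / 2) * g x + g x ^ 2 / 4 := by
      intro x hx
      rw [evenDownSteps_eq hx]
      simp only [hg]
      ring
    rw [Finset.sum_congr rfl this, Finset.sum_add_distrib, Finset.sum_add_distrib,
      ← Finset.mul_sum, G1, ← Finset.sum_div]
    simp [hCdef]
  have V : dyckVar (m + 1) (evenDownSteps (m + 1)) = (∑ x ∈ dyck (m + 1), g x ^ 2) / (4 * C) := by
    rw [dyckVar, ← Finset.sum_mul, ← Finset.sum_mul, E1, E2, dyckPi, ← hCdef]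
    field_simp
    ring
  rw [V, le_div_iff₀ (by positivity)]
  linarith

lemma evenDownSteps_le (n : ℕ) (x y : Finset ℕ) (h : (y \ x).card = 1) :
    evenDownSteps n x ≤ evenDownSteps n y + 1 := by
  have : (((Finset.Icc 1 (2 * n)) \ x).filter (fun i => Even i)).card
      ≤ (((Finset.Icc 1 (2 * n)) \ y).filter (fun i => Even i)).card + 1 := by
    rw [← h]
    refine le_trans (Finset.card_le_card ?_) (Finset.card_union_le _ _)
    intro j
    simp only [Finset.mem_filter, Finset.mem_sdiff, Finset.mem_union]
    tauto
  unfold evenDownSteps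
  exact_mod_cast this

lemma card_nbrs {n : ℕ} {x : Finset ℕ} (hx : x ∈ dyck n) :
    ((dyck n).filter fun y => (x \ y).card = 1 ∧ (y \ x).card = 1).card ≤ n * n := by
  have hx' := mem_dyck.1 hx
  have : ((dyck n).filter fun y => (x \ y).card = 1 ∧ (y \ x).card = 1) ⊆
      (x ×ˢ (Finset.Icc 1 (2 * n) \ x)).image fun p => (x \ {p.1}) ∪ {p.2} := by
    intro y hy
    rw [Finset.mem_filter] at hy
    obtain ⟨hy, h1, h2⟩ := hy
    obtain ⟨a, ha⟩ := Finset.card_eq_one.1 h1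
    obtain ⟨b, hb⟩ := Finset.card_eq_one.1 h2
    have ha' : a ∈ x \ y := by rw [ha]; simp
    have hb' : b ∈ y \ x := by rw [hb]; simp
    rw [Finset.mem_sdiff] at ha' hb'
    refine Finset.mem_image.2 ⟨(a, b), ?_, ?_⟩
    · rw [Finset.mem_product, Finset.mem_sdiff]
      exact ⟨ha'.1, (mem_dyck.1 hy).1 hb'.1, hb'.2⟩
    · simp only [← ha, ← hb]
      ext j
      simp only [Finset.mem_union, Finset.mem_sdiff]
      tauto
  refine (Finset.card_le_card this).trans (Finset.card_image_le.trans ?_)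
  rw [Finset.card_product, Finset.card_sdiff_of_subset hx'.1, hx'.2.1, Nat.card_Icc,
    show 2 * n + 1 - 1 - n = n by omega]

lemma dirichlet_le (n : ℕ) (hn : 2 ≤ n) : dyckDirichlet n (evenDownSteps n) ≤ 1 / 4 := by
  have hn0 : (0 : ℝ) < n := by exact_mod_cast (by omega : 0 < n)
  have hC : (0 : ℝ) < ((dyck n).card : ℝ) := by exact_mod_cast card_dyck_pos n
  have hpi : 0 ≤ dyckPi n := by unfold dyckPi; positivity
  have term : ∀ x y, (evenDownSteps n x - evenDownSteps n y) ^ 2 * dyckP n x y ≤ dyckStep n x y := by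
    intro x y
    unfold dyckP
    split_ifs with h
    · subst h
      simp [dyckStep]
    · unfold dyckStep
      split_ifs with hh
      · have e1 := evenDownSteps_le n x y hh.2
        have e2 := evenDownSteps_le n y x hh.1
        have : (evenDownSteps n x - evenDownSteps n y) ^ 2 ≤ 1 := by nlinarith
        exact mul_le_of_le_one_left (by positivity) this
      · simp
  have row : ∀ x ∈ dyck n, ∑ y ∈ dyck n,
      (evenDownSteps n x - evenDownSteps n y) ^ 2 * dyckP n x y * dyckPi n ≤ 1 / 2 * dyckPi n := by
    intro x hx
    rw [← Finset.sum_mul]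
    refine mul_le_mul_of_nonneg_right ?_ hpi
    refine (Finset.sum_le_sum fun y _ => term x y).trans ?_
    unfold dyckStep
    rw [← Finset.sum_filter, Finset.sum_const, nsmul_eq_mul]
    have : (((dyck n).filter fun y => (x \ y).card = 1 ∧ (y \ x).card = 1).card : ℝ) ≤ n * n := by
      exact_mod_cast card_nbrs hx
    refine (mul_le_mul_of_nonneg_right this (by positivity)).trans (le_of_eq ?_)
    field_simp
  have tot := Finset.sum_le_sum row
  rw [Finset.sum_const, nsmul_eq_mul] at tot
  have : ((dyck n).card : ℝ) * (1 / 2 * dyckPi n) = 1 / 2 := by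
    unfold dyckPi; field_simp
  rw [this] at tot
  unfold dyckDirichlet
  linarith

/-- Upper bound on the spectral gap of the Dyck random transposition chain: the
statistic counting down-steps at even indices is non-constant and satisfies
`𝓔(f,f) ≤ (4/n)·Var_π(f)`; consequently the spectral gap
`λ = inf_g 𝓔(g,g)/Var_π(g)` (over non-constant `g`) is at most `4/n`. -/
theorem dyck_spectral_gap_upper (n : ℕ) (hn : 2 ≤ n) :
    (∃ x ∈ dyck n, ∃ y ∈ dyck n, evenDownSteps n x ≠ evenDownSteps n y) ∧
    dyckDirichlet n (evenDownSteps n) ≤ (4 / (n : ℝ)) * dyckVar n (evenDownSteps n) ∧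
    sInf {l : ℝ | ∃ g : Finset ℕ → ℝ,
        (∃ x ∈ dyck n, ∃ y ∈ dyck n, g x ≠ g y) ∧
        l = dyckDirichlet n g / dyckVar n g} ≤ 4 / (n : ℝ) := by
  have hn2 : (2 : ℝ) ≤ n := by exact_mod_cast hn
  have hn0 : (0 : ℝ) < n := by linarith
  have hC : (0 : ℝ) < ((dyck n).card : ℝ) := by exact_mod_cast card_dyck_pos n
  have hV : (n : ℝ) / 16 ≤ dyckVar n (evenDownSteps n) := by
    obtain ⟨m, rfl⟩ : ∃ m, n = m + 1 := ⟨n - 1, by omega⟩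
    have := var_ge m
    push_cast at hn2 ⊢
    linarith
  have hVpos : 0 < dyckVar n (evenDownSteps n) := by linarith
  have hE := dirichlet_le n hn
  have hmain : dyckDirichlet n (evenDownSteps n) ≤ (4 / (n : ℝ)) * dyckVar n (evenDownSteps n) := by
    refine hE.trans ?_
    have := mul_le_mul_of_nonneg_left hV (by positivity : (0 : ℝ) ≤ 4 / (n : ℝ))
    refine le_trans (le_of_eq ?_) this
    field_simp
    norm_num
  have hnc : ∃ x ∈ dyck n, ∃ y ∈ dyck n, evenDownSteps n x ≠ evenDownSteps n y := by
    by_contra hcon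
    push Not at hcon
    obtain ⟨x0, hx0⟩ := Finset.card_pos.1 (card_dyck_pos n)
    have hc : ∀ x ∈ dyck n, evenDownSteps n x = evenDownSteps n x0 :=
      fun x hx => hcon x hx x0 hx0
    have : dyckVar n (evenDownSteps n) = 0 := by
      have e1 : ∑ x ∈ dyck n, evenDownSteps n x ^ 2 * dyckPi n
          = ∑ _x ∈ dyck n, evenDownSteps n x0 ^ 2 * dyckPi n :=
        Finset.sum_congr rfl fun x hx => by rw [hc x hx]
      have e2 : ∑ x ∈ dyck n, evenDownSteps n x * dyckPi n
          = ∑ _x ∈ dyck n, evenDownSteps n x0 * dyckPi n :=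
        Finset.sum_congr rfl fun x hx => by rw [hc x hx]
      rw [dyckVar, e1, e2, Finset.sum_const, Finset.sum_const, dyckPi]
      simp only [nsmul_eq_mul]
      field_simp
      ring
    linarith
  refine ⟨hnc, hmain, ?_⟩
  by_cases hb : BddBelow {l : ℝ | ∃ g : Finset ℕ → ℝ,
        (∃ x ∈ dyck n, ∃ y ∈ dyck n, g x ≠ g y) ∧
        l = dyckDirichlet n g / dyckVar n g}
  · refine (csInf_le hb ⟨evenDownSteps n, hnc, rfl⟩).trans ?_
    rwa [div_le_iff₀ hVpos]
  · rw [Real.sInf_of_not_bddBelow hb]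
    positivity
end
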